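/- Let n ≥ 2 and let β ≥ 0 and α be real numbers such that either (n−3)/2 < β < (n−1)/2 and α ≤ 2β − (n−3)/2, or β ≥ (n−1)/2 and α < β + 1. Then there exist λ with 0 < λ < 1 (depending on β and α) and a constant C (depending on n, α, β and χ) such that for all Schwartz functions f₁, f₂ on ℝⁿ and every r ∈ (0,∞), ‖ χ(·) K_r(f̂₁, f̂₂)(·) ‖_{L²_α} ≤ C r^{λ} ‖f₁‖_{W^{β,2}_1} ‖f₂‖_{W^{β,2}_1}. -/

import Mathlib

open MeasureTheory Filter Set
open scoped ENNReal RealInnerProductSpace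

noncomputable section

abbrev Euc (n : ℕ) := EuclideanSpace ℝ (Fin n)

/-- The Japanese bracket `⟨x⟩ = (1+|x|²)^{1/2}`. -/
def jap {n : ℕ} (x : Euc n) : ℝ := Real.sqrt (1 + ‖x‖ ^ 2)

/-- The Ewald sphere measure `σ_{rη}`: the `(n-1)`-dimensional Hausdorff measure restricted
to `Γ_r(η) = {ξ : |ξ - η/2| = r|η|/2}`. -/
def ewaldM (n : ℕ) (r : ℝ) (η : Euc n) : Measure (Euc n) :=
  (MeasureTheory.Measure.hausdorffMeasure ((n : ℝ) - 1)).restrict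
    (Metric.sphere ((2 : ℝ)⁻¹ • η) (r * ‖η‖ / 2))

/-- The Fourier transform `f̂(ξ) = ∫ e^{-iξ·x} f(x) dx`. -/
def ft {n : ℕ} (f : Euc n → ℂ) (ξ : Euc n) : ℂ :=
  ∫ x : Euc n, Complex.exp (-Complex.I * ((⟪ξ, x⟫ : ℝ) : ℂ)) * f x

/-- `⟨D⟩^β f`: inverse Fourier transform of `⟨ξ⟩^β f̂(ξ)`. -/
def besselD {n : ℕ} (β : ℝ) (f : Euc n → ℂ) (x : Euc n) : ℂ :=
  (((2 * Real.pi) ^ n : ℝ)⁻¹ : ℝ) •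
    ∫ ξ : Euc n, Complex.exp (Complex.I * ((⟪ξ, x⟫ : ℝ) : ℂ)) *
      (((jap ξ ^ β : ℝ) : ℂ) * ft f ξ)

/-- The weighted Sobolev norm `‖f‖_{W^{β,2}_δ} = ‖⟨·⟩^δ ⟨D⟩^β f‖_{L²}`. -/
def wSobNorm {n : ℕ} (β δ : ℝ) (f : Euc n → ℂ) : ℝ≥0∞ :=
  eLpNorm (fun x : Euc n => (jap x ^ δ : ℝ) • besselD β f x) 2 volume

/-- The spherical operator
`S_r(q)(η) = (2/(|η|(1+r))) ∫_{Γ_r(η)} q̂(ξ) q̂(η-ξ) dσ_{rη}(ξ)`. -/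
def Sr {n : ℕ} (r : ℝ) (q : Euc n → ℂ) (η : Euc n) : ℂ :=
  ((2 / (‖η‖ * (1 + r))) : ℝ) • ∫ ξ, ft q ξ * ft q (η - ξ) ∂(ewaldM n r η)

/-- `K_r(g₁,g₂)(η) = (1/|η|) ∫_{Γ_r(η)} |g₁(ξ)||g₂(η-ξ)| dσ_{rη}(ξ)`. -/
def Kr {n : ℕ} (r : ℝ) (g₁ g₂ : Euc n → ℂ) (η : Euc n) : ℝ :=
  ‖η‖⁻¹ * ∫ ξ, ‖g₁ ξ‖ * ‖g₂ (η - ξ)‖ ∂(ewaldM n r η)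

open scoped NNReal Topology FourierTransform LineDeriv

/-!
Parametrize the Ewald sphere by `ξ = η/2 - (r|η|/2)θ`, so that `u := η - ξ = η/2 + (r|η|/2)θ`,
with `θ` on the unit sphere. By the symmetry `ξ ↔ u` only the hemisphere `θ·η ≥ 0` matters, and
there `|u| ≥ |η|(1+r)/4`. By Cauchy–Schwarz, `K_r²` is bounded by a product of two integrals over
`θ`. With `F_i = ⟨·⟩^β f̂_i`, the integral of `|F₁(ξ)|²` is controlled by the trace inequality
`∫_S |F|² dσ ≤ C ‖F‖²` in the norm of `H¹`, uniform over all spheres `S`; this is where the weight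
`⟨x⟩¹` on `f₁` is spent. The integral of `|F₂(u)|²` carries the weight `⟨ξ⟩^{-2β} ⟨u⟩^{-2β}`.
Since `u - ξ = r|η|θ`, one has `2|ξ| ≥ |u| |θ - u/|u||`, so for `0 ≤ β' ≤ β` this weight is at
most a constant times `(|η|(1+r))^{-2β-2β'} |θ - u/|u||^{-2β'}`. Integrate in `η` first, by the
change of variables `η ↦ u` at fixed `θ`, whose Jacobian is at least `2^{-n}` on the half-space
`θ·η ≥ 0`; what remains is the angular singularity, integrable over the sphere when `2β' < n - 1`.
The conditions on `(α, β)` permit a choice of `β'` for which the remaining powers of `|η|` are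
bounded for `|η| ≥ C₀` and those of `r` by `r^λ` with `0 < λ < 1`.
-/

/-! ### Charts of the unit sphere -/

lemma norm_normalize_sub_normalize_le {E : Type*} [NormedAddCommGroup E] [NormedSpace ℝ E]
    {a b : E} (ha : a ≠ 0) (hb : b ≠ 0) :
    ‖‖a‖⁻¹ • a - ‖b‖⁻¹ • b‖ ≤ 2 * ‖a - b‖ / ‖b‖ := by
  have ha' : 0 < ‖a‖ := norm_pos_iff.2 ha
  have hb' : 0 < ‖b‖ := norm_pos_iff.2 hb
  have hsplit : ‖a‖⁻¹ • a - ‖b‖⁻¹ • b = ‖b‖⁻¹ • (a - b) + (‖a‖⁻¹ - ‖b‖⁻¹) • a := by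
    module
  have hradial : ‖(‖a‖⁻¹ - ‖b‖⁻¹) • a‖ = |‖b‖ - ‖a‖| / ‖b‖ := by
    rw [norm_smul, Real.norm_eq_abs, inv_sub_inv ha'.ne' hb'.ne', abs_div,
      abs_of_pos (mul_pos ha' hb')]
    field_simp
  calc ‖‖a‖⁻¹ • a - ‖b‖⁻¹ • b‖ ≤ ‖‖b‖⁻¹ • (a - b)‖ + ‖(‖a‖⁻¹ - ‖b‖⁻¹) • a‖ :=
        hsplit ▸ norm_add_le _ _
    _ = ‖a - b‖ / ‖b‖ + |‖b‖ - ‖a‖| / ‖b‖ := by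
        rw [hradial, norm_smul, norm_inv, norm_norm, inv_mul_eq_div]
    _ ≤ ‖a - b‖ / ‖b‖ + ‖a - b‖ / ‖b‖ := by
        gcongr
        exact (abs_norm_sub_norm_le b a).trans_eq (norm_sub_rev b a)
    _ = 2 * ‖a - b‖ / ‖b‖ := by ring

section Charts

variable {m : ℕ}

/-- The point of `ℝ^{m+1}` whose `i`-th coordinate is `t` and whose other coordinates are
those of `y`, in order. -/
def insertCoord (i : Fin (m + 1)) (t : ℝ) (y : Fin m → ℝ) : Euc (m + 1) :=
  WithLp.toLp 2 (i.insertNth (α := fun _ => ℝ) t y)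

@[simp]
lemma insertCoord_apply_same (i : Fin (m + 1)) (t : ℝ) (y : Fin m → ℝ) :
    insertCoord i t y i = t := by
  simp [insertCoord]

@[simp]
lemma insertCoord_apply_succAbove (i : Fin (m + 1)) (t : ℝ) (y : Fin m → ℝ) (j : Fin m) :
    insertCoord i t y (i.succAbove j) = y j := by
  simp [insertCoord]

lemma insertCoord_sub (i : Fin (m + 1)) (s t : ℝ) (y z : Fin m → ℝ) :
    insertCoord i s y - insertCoord i t z = insertCoord i (s - t) (y - z) := by
  ext k
  cases k using i.succAboveCases <;> simp

lemma smul_insertCoord (i : Fin (m + 1)) (c t : ℝ) (y : Fin m → ℝ) :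
    c • insertCoord i t y = insertCoord i (c * t) (c • y) := by
  ext k
  cases k using i.succAboveCases <;> simp

lemma abs_le_norm_insertCoord (i : Fin (m + 1)) (t : ℝ) (y : Fin m → ℝ) :
    |t| ≤ ‖insertCoord i t y‖ := by
  simpa using PiLp.norm_apply_le (insertCoord i t y) i

lemma norm_ofLp_insertCoord (i : Fin (m + 1)) (t : ℝ) (y : Fin m → ℝ) :
    ‖(insertCoord i t y).ofLp‖ = max |t| ‖y‖ := by
  refine le_antisymm ((pi_norm_le_iff_of_nonneg (by positivity)).2 fun k => ?_)
    (max_le ?_ ((pi_norm_le_iff_of_nonneg (norm_nonneg _)).2 fun j => ?_))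
  · rcases Fin.eq_self_or_eq_succAbove i k with rfl | ⟨j, rfl⟩
    · simp
    · simpa using Or.inr (norm_le_pi_norm y j)
  · simpa using norm_le_pi_norm (insertCoord i t y).ofLp i
  · simpa using norm_le_pi_norm (insertCoord i t y).ofLp (i.succAbove j)

lemma norm_le_card_mul_norm_ofLp {ι : Type*} [Fintype ι] (x : EuclideanSpace ℝ ι) :
    ‖x‖ ≤ Fintype.card ι * ‖x.ofLp‖ := by
  rw [EuclideanSpace.norm_eq, Real.sqrt_le_left (by positivity)]
  calc ∑ i, ‖x i‖ ^ 2 ≤ ∑ _ : ι, ‖x.ofLp‖ ^ 2 := by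
        gcongr with i
        exact norm_le_pi_norm x.ofLp i
    _ = Fintype.card ι * ‖x.ofLp‖ ^ 2 := by simp
    _ ≤ Fintype.card ι ^ 2 * ‖x.ofLp‖ ^ 2 := by
        gcongr
        exact_mod_cast Nat.le_self_pow two_ne_zero _
    _ = (Fintype.card ι * ‖x.ofLp‖) ^ 2 := by ring

lemma norm_insertCoord_le (i : Fin (m + 1)) (t : ℝ) (y : Fin m → ℝ) :
    ‖insertCoord i t y‖ ≤ (m + 1) * max |t| ‖y‖ := by
  simpa [norm_ofLp_insertCoord] using norm_le_card_mul_norm_ofLp (insertCoord i t y)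

lemma norm_ofLp_le_norm {ι : Type*} [Fintype ι] (x : EuclideanSpace ℝ ι) : ‖x.ofLp‖ ≤ ‖x‖ :=
  (pi_norm_le_iff_of_nonneg (norm_nonneg _)).2 fun i => PiLp.norm_apply_le x i

/-- The parametrization of the face `x_i = ε` of the unit cube of the sup norm. -/
def cubeFace (i : Fin (m + 1)) (ε : ℤˣ) (y : Fin m → ℝ) : Euc (m + 1) :=
  insertCoord i ((ε : ℤ) : ℝ) y

/-- The central projection of the cube face `x_i = ε` to the Euclidean unit sphere. Restricted to
the unit ball of the sup norm, these `2(m+1)` maps form a bi-Lipschitz atlas. -/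
def sphereChart (i : Fin (m + 1)) (ε : ℤˣ) (y : Fin m → ℝ) : Euc (m + 1) :=
  ‖cubeFace i ε y‖⁻¹ • cubeFace i ε y

variable (i : Fin (m + 1)) (ε : ℤˣ)

lemma abs_intCast_units : |((ε : ℤ) : ℝ)| = 1 := by
  rcases Int.units_eq_one_or ε with rfl | rfl <;> simp

lemma one_le_norm_cubeFace (y : Fin m → ℝ) : 1 ≤ ‖cubeFace i ε y‖ :=
  (abs_intCast_units ε).symm.trans_le (abs_le_norm_insertCoord i _ y)

lemma norm_cubeFace_pos (y : Fin m → ℝ) : 0 < ‖cubeFace i ε y‖ :=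
  one_pos.trans_le (one_le_norm_cubeFace i ε y)

lemma cubeFace_ne_zero (y : Fin m → ℝ) : cubeFace i ε y ≠ 0 :=
  norm_pos_iff.1 (norm_cubeFace_pos i ε y)

lemma norm_ofLp_cubeFace {y : Fin m → ℝ} (hy : y ∈ Metric.closedBall 0 1) :
    ‖(cubeFace i ε y).ofLp‖ = 1 := by
  rw [cubeFace, norm_ofLp_insertCoord, abs_intCast_units, max_eq_left (by simpa using hy)]

lemma norm_cubeFace_le {y : Fin m → ℝ} (hy : y ∈ Metric.closedBall 0 1) :
    ‖cubeFace i ε y‖ ≤ m + 1 := by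
  simpa [norm_ofLp_cubeFace i ε hy] using norm_le_card_mul_norm_ofLp (cubeFace i ε y)

lemma norm_sphereChart (y : Fin m → ℝ) : ‖sphereChart i ε y‖ = 1 := by
  rw [sphereChart, norm_smul, norm_inv, norm_norm, inv_mul_cancel₀ (norm_cubeFace_pos i ε y).ne']

lemma norm_cubeFace_sub_cubeFace_le (y z : Fin m → ℝ) :
    ‖cubeFace i ε y - cubeFace i ε z‖ ≤ (m + 1) * ‖y - z‖ := by
  rw [cubeFace, cubeFace, insertCoord_sub, sub_self]
  simpa using norm_insertCoord_le i 0 (y - z)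

lemma lipschitzWith_sphereChart : LipschitzWith (2 * (m + 1)) (sphereChart i ε) := by
  refine LipschitzWith.of_dist_le_mul fun y z => ?_
  rw [dist_eq_norm, dist_eq_norm]
  calc ‖sphereChart i ε y - sphereChart i ε z‖
      ≤ 2 * ‖cubeFace i ε y - cubeFace i ε z‖ / ‖cubeFace i ε z‖ :=
        norm_normalize_sub_normalize_le (cubeFace_ne_zero i ε y) (cubeFace_ne_zero i ε z)
    _ ≤ 2 * ‖cubeFace i ε y - cubeFace i ε z‖ :=
        div_le_self (by positivity) (one_le_norm_cubeFace i ε z)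
    _ ≤ 2 * ((m + 1) * ‖y - z‖) := by gcongr; exact norm_cubeFace_sub_cubeFace_le i ε y z
    _ = (2 * (m + 1) : ℝ≥0) * ‖y - z‖ := by push_cast; ring

/- A cube face is recovered from its chart by normalizing in the sup norm, so the bound for
normalization applies to the inverse of the chart as well. -/
lemma norm_sub_le_mul_norm_sphereChart_sub {y z : Fin m → ℝ} (hy : y ∈ Metric.closedBall 0 1)
    (hz : z ∈ Metric.closedBall 0 1) :
    ‖y - z‖ ≤ 2 * (m + 1) * ‖sphereChart i ε y - sphereChart i ε z‖ := by
  have hne : ∀ y, (sphereChart i ε y).ofLp ≠ 0 := fun y h => by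
    simpa [WithLp.ofLp_eq_zero _ |>.1 h] using norm_sphereChart i ε y
  have hsup : ∀ {y : Fin m → ℝ}, y ∈ Metric.closedBall 0 1 →
      ‖(sphereChart i ε y).ofLp‖ = ‖cubeFace i ε y‖⁻¹ := fun hy => by
    rw [sphereChart, WithLp.ofLp_smul, norm_smul, norm_ofLp_cubeFace i ε hy, norm_inv, norm_norm,
      mul_one]
  have hnormalize : ∀ {y : Fin m → ℝ}, y ∈ Metric.closedBall 0 1 →
      ‖(sphereChart i ε y).ofLp‖⁻¹ • (sphereChart i ε y).ofLp = (cubeFace i ε y).ofLp :=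
    fun {y} hy => by
      rw [hsup hy, inv_inv, sphereChart, WithLp.ofLp_smul,
        smul_inv_smul₀ (norm_cubeFace_pos i ε y).ne']
  calc ‖y - z‖ ≤ ‖(cubeFace i ε y).ofLp - (cubeFace i ε z).ofLp‖ := by
        rw [← WithLp.ofLp_sub 2 (cubeFace i ε y), cubeFace, cubeFace, insertCoord_sub,
          norm_ofLp_insertCoord]
        exact le_max_right _ _
    _ ≤ 2 * ‖(sphereChart i ε y - sphereChart i ε z).ofLp‖ / ‖(sphereChart i ε z).ofLp‖ := by
        rw [← hnormalize hy, ← hnormalize hz]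
        exact norm_normalize_sub_normalize_le (hne y) (hne z)
    _ = 2 * ‖cubeFace i ε z‖ * ‖(sphereChart i ε y - sphereChart i ε z).ofLp‖ := by
        rw [hsup hz, div_inv_eq_mul]; ring
    _ ≤ 2 * (m + 1) * ‖sphereChart i ε y - sphereChart i ε z‖ := by
        gcongr
        · exact norm_cubeFace_le i ε hz
        · exact norm_ofLp_le_norm _

end Charts

lemma exists_sphereChart_eq {m : ℕ} {θ : Euc (m + 1)} (hθ : ‖θ‖ = 1) :
    ∃ i ε, ∃ y ∈ Metric.closedBall 0 1, sphereChart i ε y = θ := by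
  obtain ⟨i, hi⟩ := Finite.exists_max fun j => |θ j|
  have hpos : 0 < |θ i| := by
    refine abs_pos.2 fun h0 => ?_
    have : θ = 0 := by
      ext j
      simpa [h0] using hi j
    simp [this] at hθ
  obtain ⟨ε, hε⟩ : ∃ ε : ℤˣ, |θ i|⁻¹ * θ i = ((ε : ℤ) : ℝ) := by
    rcases abs_cases (θ i) with ⟨h, -⟩ | ⟨h, -⟩
    · exact ⟨1, by rw [h] at hpos ⊢; simp [hpos.ne']⟩
    · refine ⟨-1, ?_⟩
      rw [h] at hpos ⊢
      simp [inv_neg, (neg_pos.1 hpos).ne]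
  have hface : cubeFace i ε (fun j => |θ i|⁻¹ * θ (i.succAbove j)) = |θ i|⁻¹ • θ := by
    ext k
    cases k using i.succAboveCases <;> simp [cubeFace, hε]
  refine ⟨i, ε, fun j => |θ i|⁻¹ * θ (i.succAbove j), ?_, ?_⟩
  · rw [mem_closedBall_zero_iff, pi_norm_le_iff_of_nonneg zero_le_one]
    intro j
    rw [Real.norm_eq_abs, abs_mul, abs_inv, abs_abs, inv_mul_le_iff₀ hpos, mul_one]
    exact hi _
  · rw [sphereChart, hface, norm_smul, hθ, norm_inv, Real.norm_eq_abs, abs_abs, mul_one, inv_inv,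
      smul_inv_smul₀ hpos.ne']

/-! ### The surface measure of the unit sphere -/

lemma setLIntegral_image_hausdorffMeasure_le {X Y : Type*} [EMetricSpace X] [EMetricSpace Y]
    [MeasurableSpace X] [BorelSpace X] [MeasurableSpace Y] [BorelSpace Y] {f : X → Y} {K : ℝ≥0}
    (hf : LipschitzWith K f) {d : ℝ} (hd : 0 ≤ d) (s : Set X) {g : Y → ℝ≥0∞}
    (hg : Measurable g) :
    ∫⁻ y in f '' s, g y ∂μH[d] ≤ (K : ℝ≥0∞) ^ d * ∫⁻ x in s, g (f x) ∂μH[d] := by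
  have hfm : Measurable f := hf.continuous.measurable
  have hle : (μH[d]).restrict (f '' s) ≤ (K : ℝ≥0∞) ^ d • ((μH[d]).restrict s).map f := by
    refine Measure.le_iff.2 fun E hE => ?_
    rw [Measure.restrict_apply hE, Measure.smul_apply, Measure.map_apply hfm hE,
      Measure.restrict_apply (hfm hE), inter_comm, ← image_inter_preimage, inter_comm]
    exact hf.lipschitzOnWith.hausdorffMeasure_image_le hd
  refine (lintegral_mono' hle le_rfl).trans_eq ?_
  rw [lintegral_smul_measure, lintegral_map hg hfm, smul_eq_mul]

/-- The surface measure of the unit sphere of `ℝ^{m+1}`, as a measure on the ambient space. -/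
def unitSphereMeasure (m : ℕ) : Measure (Euc (m + 1)) :=
  (μH[m]).restrict (Metric.sphere 0 1)

section UnitSphereMeasure

variable {m : ℕ} {g : Euc (m + 1) → ℝ≥0∞}

lemma lintegral_unitSphereMeasure_le_sum (hg : Measurable g) :
    ∫⁻ θ, g θ ∂unitSphereMeasure m ≤ (2 * (m + 1)) ^ m *
      ∑ p : Fin (m + 1) × ℤˣ, ∫⁻ y in Metric.closedBall 0 1, g (sphereChart p.1 p.2 y) := by
  have hcover : Metric.sphere (0 : Euc (m + 1)) 1 ⊆
      ⋃ p : Fin (m + 1) × ℤˣ, sphereChart p.1 p.2 '' Metric.closedBall 0 1 := by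
    intro θ hθ
    obtain ⟨i, ε, hy⟩ := exists_sphereChart_eq (mem_sphere_zero_iff_norm.1 hθ)
    exact mem_iUnion.2 ⟨(i, ε), hy⟩
  refine (lintegral_mono_set hcover).trans ((lintegral_iUnion_le _ _).trans ?_)
  rw [tsum_fintype, Finset.mul_sum]
  refine Finset.sum_le_sum fun p _ => ?_
  have hvol : (μH[m] : Measure (Fin m → ℝ)) = volume := by
    simpa using hausdorffMeasure_pi_real (ι := Fin m)
  simpa [hvol] using setLIntegral_image_hausdorffMeasure_le (lipschitzWith_sphereChart p.1 p.2)
    m.cast_nonneg (Metric.closedBall 0 1) hg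

instance : IsFiniteMeasure (unitSphereMeasure m) := by
  constructor
  rw [← lintegral_one]
  refine (lintegral_unitSphereMeasure_le_sum measurable_const).trans_lt
    (ENNReal.mul_lt_top (by finiteness) (ENNReal.sum_lt_top.2 fun p _ => ?_))
  simp

lemma ae_unitSphereMeasure_norm_eq_one : ∀ᵐ θ ∂unitSphereMeasure m, ‖θ‖ = 1 :=
  (ae_restrict_mem Metric.isClosed_sphere.measurableSet).mono fun _ => mem_sphere_zero_iff_norm.1

lemma measurePreserving_neg_unitSphereMeasure :
    MeasurePreserving (fun θ : Euc (m + 1) => -θ) (unitSphereMeasure m) (unitSphereMeasure m) := by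
  have hpre : IsometryEquiv.neg (Euc (m + 1)) ⁻¹' Metric.sphere 0 1 = Metric.sphere 0 1 := by
    ext; simp
  have := ((IsometryEquiv.neg (Euc (m + 1))).measurePreserving_hausdorffMeasure
    m).restrict_preimage (Metric.isClosed_sphere (x := 0) (ε := 1)).measurableSet
  rwa [hpre] at this

lemma lintegral_neg_unitSphereMeasure (hg : Measurable g) :
    ∫⁻ θ, g (-θ) ∂unitSphereMeasure m = ∫⁻ θ, g θ ∂unitSphereMeasure m :=
  measurePreserving_neg_unitSphereMeasure.lintegral_comp hg

lemma setLIntegral_sphere_le (c : Euc (m + 1)) {ρ : ℝ} (hρ : 0 ≤ ρ) (hg : Measurable g) :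
    ∫⁻ ξ in Metric.sphere c ρ, g ξ ∂μH[m] ≤
      ENNReal.ofReal ρ ^ m * ∫⁻ θ, g (c + ρ • θ) ∂unitSphereMeasure m := by
  have himage : (fun θ => c + ρ • θ) '' Metric.sphere 0 1 = Metric.sphere c ρ := by
    rw [← image_image (c + ·) (ρ • ·), image_smul, smul_sphere ρ 0 zero_le_one]
    simp [abs_of_nonneg hρ]
  have hlip : LipschitzWith ρ.toNNReal fun θ : Euc (m + 1) => c + ρ • θ := by
    refine LipschitzWith.of_dist_le_mul fun y z => ?_
    rw [dist_add_left, dist_smul₀, Real.norm_of_nonneg hρ, Real.coe_toNNReal _ hρ]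
  simpa [himage, ENNReal.ofReal, unitSphereMeasure] using
    setLIntegral_image_hausdorffMeasure_le hlip m.cast_nonneg (Metric.sphere 0 1) hg

end UnitSphereMeasure

/-! ### Singular integrals on the unit sphere -/

lemma rpow_neg_le_mul_rpow_neg {x y : ℝ≥0∞} {L : ℝ≥0} (hL : L ≠ 0) {a : ℝ} (ha : 0 ≤ a)
    (h : x ≤ L * y) : y ^ (-a) ≤ (L : ℝ≥0∞) ^ a * x ^ (-a) := by
  have hLa : (L : ℝ≥0∞) ^ a ≠ 0 := by simp [hL, ENNReal.rpow_eq_zero_iff]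
  have hLa' : (L : ℝ≥0∞) ^ a ≠ ∞ := ENNReal.rpow_ne_top_of_nonneg ha ENNReal.coe_ne_top
  calc y ^ (-a) = L ^ a * (L * y) ^ (-a) := by
        rw [ENNReal.rpow_neg, ENNReal.rpow_neg, ENNReal.mul_rpow_of_nonneg _ _ ha,
          ENNReal.mul_inv (.inl hLa) (.inl hLa'), ENNReal.mul_inv_cancel_left hLa hLa']
    _ ≤ L ^ a * x ^ (-a) := by
        rw [ENNReal.rpow_neg, ENNReal.rpow_neg]
        gcongr

lemma exists_forall_dist_le_mul_dist {X Y : Type*} [PseudoMetricSpace X] [PseudoMetricSpace Y]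
    {s : Set X} (hs : IsCompact s) (hne : s.Nonempty) {f : X → Y} (hf : ContinuousOn f s) {K : ℝ≥0}
    (hK : ∀ y ∈ s, ∀ z ∈ s, dist y z ≤ K * dist (f y) (f z)) (ω : Y) :
    ∃ y₀ ∈ s, ∀ y ∈ s, dist y y₀ ≤ 2 * K * dist (f y) ω := by
  obtain ⟨y₀, hy₀, hmin⟩ := hs.exists_isMinOn hne
    (f := fun y => dist (f y) ω) (by fun_prop)
  refine ⟨y₀, hy₀, fun y hy => ?_⟩
  calc dist y y₀ ≤ K * dist (f y) (f y₀) := hK y hy y₀ hy₀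
    _ ≤ K * (dist (f y) ω + dist (f y) ω) := by
        gcongr
        exact (dist_triangle_right _ _ ω).trans (add_le_add_right (hmin hy) _)
    _ = 2 * K * dist (f y) ω := by ring

section RieszSingularity

variable {E : Type*} [NormedAddCommGroup E] [NormedSpace ℝ E] [FiniteDimensional ℝ E]
  [Nontrivial E] [MeasurableSpace E] [BorelSpace E] (μ : Measure E) [μ.IsAddHaarMeasure]

lemma setLIntegral_ball_enorm_rpow_neg_lt_top {a R : ℝ} (ha : a < Module.finrank ℝ E)
    (hR : 0 < R) : ∫⁻ z in Metric.ball (0 : E) R, ‖z‖ₑ ^ (-a) ∂μ < ∞ := by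
  have hint : IntegrableOn (fun x : E => ‖x‖ ^ (-a)) (Metric.ball 0 R) μ := by
    rw [integrableOn_fun_norm_addHaar μ (f := fun t : ℝ => t ^ (-a))]
    refine ((intervalIntegral.integrableOn_Ioo_rpow_iff
      (s := Module.finrank ℝ E - 1 - a) hR).2 (by linarith)).congr_fun (fun t ht => ?_)
      measurableSet_Ioo
    simp only [smul_eq_mul]
    rw [← Real.rpow_natCast, ← Real.rpow_add ht.1,
      Nat.cast_sub (Nat.one_le_iff_ne_zero.2 Module.finrank_pos.ne'), Nat.cast_one, sub_eq_add_neg]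
  refine lt_of_eq_of_lt (lintegral_congr_ae (ae_restrict_of_ae ?_)) hint.2
  filter_upwards [compl_mem_ae_iff.2 (measure_singleton (μ := μ) (0 : E))] with z hz
  rw [Real.enorm_eq_ofReal (by positivity), ← ofReal_norm,
    ENNReal.ofReal_rpow_of_pos (norm_pos_iff.2 hz)]

lemma exists_forall_setLIntegral_enorm_sub_rpow_neg_le {F : Type*} [NormedAddCommGroup F]
    {s : Set E} (hs : IsCompact s) {f : E → F} (hf : ContinuousOn f s) {K : ℝ≥0} (hK₀ : K ≠ 0)
    (hK : ∀ y ∈ s, ∀ z ∈ s, ‖y - z‖ ≤ K * ‖f y - f z‖) {a : ℝ} (ha₀ : 0 ≤ a)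
    (ha : a < Module.finrank ℝ E) :
    ∃ C : ℝ≥0, ∀ ω, ∫⁻ y in s, ‖f y - ω‖ₑ ^ (-a) ∂μ ≤ C := by
  rcases s.eq_empty_or_nonempty with rfl | hne
  · exact ⟨0, by simp⟩
  obtain ⟨R, hR, hsR⟩ := hs.isBounded.exists_pos_norm_le
  set B := Metric.ball (0 : E) (2 * R + 1)
  have hB : ∫⁻ z in B, ‖z‖ₑ ^ (-a) ∂μ ≠ ∞ :=
    (setLIntegral_ball_enorm_rpow_neg_lt_top μ ha (by positivity)).ne
  refine ⟨(((2 * K : ℝ≥0) : ℝ≥0∞) ^ a * ∫⁻ z in B, ‖z‖ₑ ^ (-a) ∂μ).toNNReal, fun ω => ?_⟩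
  rw [ENNReal.coe_toNNReal (by finiteness)]
  simp only [← dist_eq_norm] at hK
  obtain ⟨y₀, hy₀, hdist⟩ := exists_forall_dist_le_mul_dist hs hne hf hK ω
  have hpoint : ∀ y ∈ s,
      ‖f y - ω‖ₑ ^ (-a) ≤ ((2 * K : ℝ≥0) : ℝ≥0∞) ^ a * ‖y - y₀‖ₑ ^ (-a) := fun y hy => by
    refine rpow_neg_le_mul_rpow_neg (by simpa using hK₀) ha₀ ?_
    rw [enorm_eq_nnnorm, enorm_eq_nnnorm, ← ENNReal.coe_mul, ENNReal.coe_le_coe,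
      ← NNReal.coe_le_coe]
    simpa [dist_eq_norm] using hdist y hy
  have hsub : ∀ y ∈ s, y - y₀ ∈ B := fun y hy => by
    rw [mem_ball_zero_iff]
    linarith [norm_sub_le y y₀, hsR y hy, hsR y₀ hy₀]
  calc ∫⁻ y in s, ‖f y - ω‖ₑ ^ (-a) ∂μ
      ≤ ∫⁻ y in s, ((2 * K : ℝ≥0) : ℝ≥0∞) ^ a * ‖y - y₀‖ₑ ^ (-a) ∂μ :=
        setLIntegral_mono' hs.measurableSet hpoint
    _ ≤ ∫⁻ y in (· - y₀) ⁻¹' B, ((2 * K : ℝ≥0) : ℝ≥0∞) ^ a * ‖y - y₀‖ₑ ^ (-a) ∂μ :=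
        lintegral_mono_set hsub
    _ = ∫⁻ z in B, ((2 * K : ℝ≥0) : ℝ≥0∞) ^ a * ‖z‖ₑ ^ (-a) ∂μ :=
        (measurePreserving_sub_right μ y₀).setLIntegral_comp_preimage measurableSet_ball
          (f := fun z => ((2 * K : ℝ≥0) : ℝ≥0∞) ^ a * ‖z‖ₑ ^ (-a)) (by fun_prop)
    _ = ((2 * K : ℝ≥0) : ℝ≥0∞) ^ a * ∫⁻ z in B, ‖z‖ₑ ^ (-a) ∂μ :=
        lintegral_const_mul _ (by fun_prop)

end RieszSingularity

lemma exists_forall_lintegral_unitSphereMeasure_rpow_neg_le {m : ℕ} {a : ℝ} (ha₀ : 0 ≤ a)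
    (ha : a < m) :
    ∃ C : ℝ≥0, ∀ ω, ∫⁻ θ, ‖θ - ω‖ₑ ^ (-a) ∂unitSphereMeasure m ≤ C := by
  have : Nonempty (Fin m) := Fin.pos_iff_nonempty.1 (by exact_mod_cast ha₀.trans_lt ha)
  choose C hC using fun p : Fin (m + 1) × ℤˣ =>
    exists_forall_setLIntegral_enorm_sub_rpow_neg_le (volume : Measure (Fin m → ℝ))
      (isCompact_closedBall 0 1) (lipschitzWith_sphereChart p.1 p.2).continuous.continuousOn
      (K := 2 * (m + 1)) (by positivity)
      (fun y hy z hz => by simpa using norm_sub_le_mul_norm_sphereChart_sub p.1 p.2 hy hz) ha₀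
      (by simpa using ha)
  refine ⟨(2 * (m + 1)) ^ m * ∑ p, C p, fun ω => ?_⟩
  refine (lintegral_unitSphereMeasure_le_sum (by fun_prop)).trans ?_
  push_cast
  gcongr with p
  exact hC p ω

/-! ### The trace inequality on spheres -/

lemma enorm_le_setLIntegral_Ioi_enorm_deriv {V : Type*} [NormedAddCommGroup V] [NormedSpace ℝ V]
    [CompleteSpace V] {φ φ' : ℝ → V} (hφ : ∀ s, HasDerivAt φ (φ' s) s) (hφ' : Continuous φ')
    (hlim : Tendsto φ atTop (𝓝 0)) (a : ℝ) : ‖φ a‖ₑ ≤ ∫⁻ s in Ioi a, ‖φ' s‖ₑ := by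
  have hlim' : Tendsto (fun R => ‖φ a - φ R‖ₑ) atTop (𝓝 ‖φ a‖ₑ) := by
    simpa using (tendsto_const_nhds.sub hlim).enorm (f := fun R => φ a - φ R)
  refine le_of_tendsto hlim' ((eventually_ge_atTop a).mono fun R hR => ?_)
  calc ‖φ a - φ R‖ₑ = ‖∫ s in Ioc a R, φ' s‖ₑ := by
        rw [← intervalIntegral.integral_of_le hR, intervalIntegral.integral_eq_sub_of_hasDerivAt
          (fun s _ => hφ s) (hφ'.intervalIntegrable _ _), enorm_sub_rev]
    _ ≤ ∫⁻ s in Ioc a R, ‖φ' s‖ₑ := enorm_integral_le_lintegral_enorm _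
    _ ≤ ∫⁻ s in Ioi a, ‖φ' s‖ₑ := lintegral_mono_set Ioc_subset_Ioi_self

lemma lintegral_comp_smul {E : Type*} [NormedAddCommGroup E] [NormedSpace ℝ E]
    [FiniteDimensional ℝ E] [MeasurableSpace E] [BorelSpace E] (μ : Measure E)
    [μ.IsAddHaarMeasure] (g : E → ℝ≥0∞) {c : ℝ} (hc : c ≠ 0) :
    ENNReal.ofReal (|c| ^ Module.finrank ℝ E) * ∫⁻ x, g (c • x) ∂μ = ∫⁻ x, g x ∂μ := by
  have hmap : ∫⁻ x, g (c • x) ∂μ = ∫⁻ x, g x ∂μ.map (c • ·) :=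
    ((Homeomorph.smulOfNeZero c hc).measurableEmbedding.lintegral_map g).symm
  have hpos : 0 < |c| ^ Module.finrank ℝ E := by positivity
  rw [hmap, Measure.map_addHaar_smul μ hc, lintegral_smul_measure, smul_eq_mul, ← mul_assoc,
    ← ENNReal.ofReal_mul hpos.le, abs_inv, abs_pow, mul_inv_cancel₀ hpos.ne', ENNReal.ofReal_one,
    one_mul]

section SobolevDensity

variable {E V : Type*} [NormedAddCommGroup E] [NormedSpace ℝ E] [NormedAddCommGroup V]

/-- The density `|F|² + |∇F|²` of the squared `H¹` norm, with the operator norm on `∇F`. -/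
def sobolevDensity [NormedSpace ℝ V] (F : E → V) (x : E) : ℝ≥0∞ :=
  ‖F x‖ₑ ^ 2 + ‖fderiv ℝ F x‖ₑ ^ 2

lemma sobolevDensity_comp_add_left [NormedSpace ℝ V] (F : E → V) (c x : E) :
    sobolevDensity (fun z => F (c + z)) x = sobolevDensity F (c + x) := by
  simp only [sobolevDensity, fderiv_comp_add_left]

lemma continuous_sobolevDensity [NormedSpace ℝ V] {F : E → V} (hF : ContDiff ℝ 1 F) :
    Continuous (sobolevDensity F) := by
  have := hF.continuous
  have := hF.continuous_fderiv one_ne_zero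
  unfold sobolevDensity
  fun_prop

variable [InnerProductSpace ℝ V] {F : E → V}

lemma enorm_deriv_norm_sq_le (F : E → V) (x P : E) :
    ‖2 * ⟪F x, fderiv ℝ F x P⟫‖ₑ ≤ ‖P‖ₑ * sobolevDensity F x := by
  have hreal : ‖2 * ⟪F x, fderiv ℝ F x P⟫‖ ≤ ‖P‖ * (‖F x‖ ^ 2 + ‖fderiv ℝ F x‖ ^ 2) :=
    calc ‖2 * ⟪F x, fderiv ℝ F x P⟫‖ ≤ 2 * (‖F x‖ * (‖fderiv ℝ F x‖ * ‖P‖)) := by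
          rw [norm_mul, Real.norm_two]
          gcongr
          exact (norm_inner_le_norm _ _).trans (by gcongr; exact (fderiv ℝ F x).le_opNorm P)
      _ = ‖P‖ * (2 * ‖F x‖ * ‖fderiv ℝ F x‖) := by ring
      _ ≤ ‖P‖ * (‖F x‖ ^ 2 + ‖fderiv ℝ F x‖ ^ 2) := by
          gcongr
          exact two_mul_le_add_sq _ _
  have := ENNReal.ofReal_le_ofReal hreal
  rwa [ENNReal.ofReal_mul (norm_nonneg _), ENNReal.ofReal_add (sq_nonneg _) (sq_nonneg _),
    ENNReal.ofReal_pow (norm_nonneg _), ENNReal.ofReal_pow (norm_nonneg _), ofReal_norm,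
    ofReal_norm, ofReal_norm, ofReal_norm] at this

lemma tendsto_smul_atTop_cobounded {P : E} (hP : P ≠ 0) :
    Tendsto (fun s : ℝ => s • P) atTop (Bornology.cobounded E) := by
  rw [← tendsto_norm_atTop_iff_cobounded]
  simpa only [norm_smul] using tendsto_norm_atTop_atTop.atTop_mul_const (norm_pos_iff.2 hP)

lemma enorm_sq_le_setLIntegral_ray (hF : ContDiff ℝ 1 F)
    (hF₀ : Tendsto F (Bornology.cobounded E) (𝓝 0)) {P : E} (hP : P ≠ 0) (a : ℝ) :
    ‖F (a • P)‖ₑ ^ 2 ≤ ‖P‖ₑ * ∫⁻ s in Ioi a, sobolevDensity F (s • P) := by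
  have hderiv : ∀ s : ℝ, HasDerivAt (fun s : ℝ => ‖F (s • P)‖ ^ 2)
      (2 * ⟪F (s • P), fderiv ℝ F (s • P) P⟫) s := fun s =>
    ((hF.differentiable one_ne_zero _).hasFDerivAt.comp_hasDerivAt s
      (by simpa using (hasDerivAt_id s).smul_const P)).norm_sq
  have hcont : Continuous fun s : ℝ => 2 * ⟪F (s • P), fderiv ℝ F (s • P) P⟫ := by
    have := hF.continuous
    have := hF.continuous_fderiv one_ne_zero
    fun_prop
  have hlim : Tendsto (fun s : ℝ => ‖F (s • P)‖ ^ 2) atTop (𝓝 0) := by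
    simpa using (hF₀.comp (tendsto_smul_atTop_cobounded hP)).norm.pow 2
  calc ‖F (a • P)‖ₑ ^ 2 = ‖‖F (a • P)‖ ^ 2‖ₑ := by rw [enorm_pow, enorm_norm]
    _ ≤ ∫⁻ s in Ioi a, ‖2 * ⟪F (s • P), fderiv ℝ F (s • P) P⟫‖ₑ :=
        enorm_le_setLIntegral_Ioi_enorm_deriv hderiv hcont hlim a
    _ ≤ ∫⁻ s in Ioi a, ‖P‖ₑ * sobolevDensity F (s • P) :=
        lintegral_mono fun s => enorm_deriv_norm_sq_le F (s • P) P
    _ = ‖P‖ₑ * ∫⁻ s in Ioi a, sobolevDensity F (s • P) :=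
        lintegral_const_mul' _ _ enorm_ne_top

lemma pow_mul_enorm_sq_le_setLIntegral_ray (hF : ContDiff ℝ 1 F)
    (hF₀ : Tendsto F (Bornology.cobounded E) (𝓝 0)) {P : E} (hP : P ≠ 0) (m : ℕ) {a : ℝ}
    (ha : 0 ≤ a) :
    ENNReal.ofReal a ^ m * ‖F (a • P)‖ₑ ^ 2 ≤
      ‖P‖ₑ * ∫⁻ s in Ioi 0, ENNReal.ofReal s ^ m * sobolevDensity F (s • P) :=
  calc ENNReal.ofReal a ^ m * ‖F (a • P)‖ₑ ^ 2
      ≤ ENNReal.ofReal a ^ m * (‖P‖ₑ * ∫⁻ s in Ioi a, sobolevDensity F (s • P)) := by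
        gcongr
        exact enorm_sq_le_setLIntegral_ray hF hF₀ hP a
    _ = ‖P‖ₑ * ∫⁻ s in Ioi a, ENNReal.ofReal a ^ m * sobolevDensity F (s • P) := by
        rw [lintegral_const_mul' _ _ (by finiteness), mul_left_comm]
    _ ≤ ‖P‖ₑ * ∫⁻ s in Ioi a, ENNReal.ofReal s ^ m * sobolevDensity F (s • P) :=
        mul_right_mono (setLIntegral_mono' measurableSet_Ioi fun s (hs : a < s) => by gcongr)
    _ ≤ ‖P‖ₑ * ∫⁻ s in Ioi 0, ENNReal.ofReal s ^ m * sobolevDensity F (s • P) := by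
        gcongr

end SobolevDensity

section Trace

variable {m : ℕ}

@[fun_prop]
lemma continuous_insertCoord {X : Type*} [TopologicalSpace X] {i : Fin (m + 1)} {f : X → ℝ}
    {g : X → Fin m → ℝ} (hf : Continuous f) (hg : Continuous g) :
    Continuous fun x => insertCoord i (f x) (g x) :=
  (PiLp.continuous_toLp 2 _).comp (hf.finInsertNth i hg)

lemma lintegral_insertCoord (i : Fin (m + 1)) {g : Euc (m + 1) → ℝ≥0∞} (hg : Measurable g) :
    ∫⁻ s, ∫⁻ y, g (insertCoord i s y) = ∫⁻ x, g x := by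
  have hpi := (PiLp.volume_preserving_toLp (Fin (m + 1))).comp
    ((volume_preserving_piFinSuccAbove (fun _ : Fin (m + 1) => ℝ) i).symm _)
  rw [← hpi.lintegral_comp hg]
  exact (lintegral_prod _ (hg.comp hpi.measurable).aemeasurable).symm

lemma lintegral_cone_le (i : Fin (m + 1)) (ε : ℤˣ) {G : Euc (m + 1) → ℝ≥0∞} (hG : Measurable G) :
    ∫⁻ y, ∫⁻ s in Ioi 0, ENNReal.ofReal s ^ m * G (s • cubeFace i ε y) ≤ ∫⁻ x, G x := by
  have hslice : ∀ s ∈ Ioi (0 : ℝ), ∫⁻ y, ENNReal.ofReal s ^ m * G (s • cubeFace i ε y) =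
      ∫⁻ x, G (insertCoord i ((ε : ℤ) * s) x) := fun s (hs : 0 < s) => by
    rw [lintegral_const_mul' _ _ (by finiteness),
      ← lintegral_comp_smul volume (fun x => G (insertCoord i ((ε : ℤ) * s) x)) hs.ne',
      abs_of_pos hs, Module.finrank_fin_fun, ENNReal.ofReal_pow hs.le]
    simp only [cubeFace, smul_insertCoord, mul_comm s]
  have hflip : ∀ h : ℝ → ℝ≥0∞, ∫⁻ s, h ((ε : ℤ) * s) = ∫⁻ s, h s := fun h => by
    rcases Int.units_eq_one_or ε with rfl | rfl
    · simp
    · simpa using lintegral_neg_eq_self (μ := (volume : Measure ℝ)) h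
  rw [lintegral_lintegral_swap (by unfold cubeFace; fun_prop),
    setLIntegral_congr_fun measurableSet_Ioi hslice]
  refine (setLIntegral_le_lintegral _ _).trans_eq ?_
  rw [hflip fun t => ∫⁻ x, G (insertCoord i t x), lintegral_insertCoord i hG]

variable {V : Type*} [NormedAddCommGroup V] [InnerProductSpace ℝ V] {F : Euc (m + 1) → V}

lemma setLIntegral_sphereChart_enorm_sq_le (i : Fin (m + 1)) (ε : ℤˣ) (hF : ContDiff ℝ 1 F)
    (hF₀ : Tendsto F (Bornology.cobounded (Euc (m + 1))) (𝓝 0)) {ρ : ℝ} (hρ : 0 ≤ ρ) :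
    ENNReal.ofReal ρ ^ m * ∫⁻ y in Metric.closedBall 0 1, ‖F (ρ • sphereChart i ε y)‖ₑ ^ 2 ≤
      (m + 1) ^ (m + 1) * ∫⁻ x, sobolevDensity F x := by
  have hray : ∀ y ∈ Metric.closedBall (0 : Fin m → ℝ) 1,
      ENNReal.ofReal ρ ^ m * ‖F (ρ • sphereChart i ε y)‖ₑ ^ 2 ≤
      (m + 1) ^ (m + 1) *
        ∫⁻ s in Ioi 0, ENNReal.ofReal s ^ m * sobolevDensity F (s • cubeFace i ε y) := by
    intro y hy
    set N := ‖cubeFace i ε y‖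
    have hN : 0 < N := norm_cubeFace_pos i ε y
    have hN' : ENNReal.ofReal N ≤ m + 1 := by
      simpa [N, ENNReal.ofReal_add] using ENNReal.ofReal_le_ofReal (norm_cubeFace_le i ε hy)
    have hpow : ENNReal.ofReal ρ ^ m = ENNReal.ofReal N ^ m * ENNReal.ofReal (ρ * N⁻¹) ^ m := by
      rw [← mul_pow, ← ENNReal.ofReal_mul hN.le, mul_left_comm, mul_inv_cancel₀ hN.ne', mul_one]
    rw [hpow, sphereChart, smul_smul, mul_assoc, pow_succ (m + 1 : ℝ≥0∞), mul_assoc]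
    refine mul_le_mul' (by gcongr) ((pow_mul_enorm_sq_le_setLIntegral_ray hF hF₀
      (cubeFace_ne_zero i ε y) m (by positivity)).trans ?_)
    rw [← ofReal_norm]
    gcongr
  rw [← lintegral_const_mul' _ _ (by finiteness)]
  calc ∫⁻ y in Metric.closedBall 0 1, ENNReal.ofReal ρ ^ m * ‖F (ρ • sphereChart i ε y)‖ₑ ^ 2
      ≤ ∫⁻ y, (m + 1) ^ (m + 1) *
          ∫⁻ s in Ioi 0, ENNReal.ofReal s ^ m * sobolevDensity F (s • cubeFace i ε y) :=
        (setLIntegral_mono' Metric.isClosed_closedBall.measurableSet hray).trans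
          (setLIntegral_le_lintegral _ _)
    _ ≤ (m + 1) ^ (m + 1) * ∫⁻ x, sobolevDensity F x := by
        rw [lintegral_const_mul' _ _ (by finiteness)]
        gcongr
        exact lintegral_cone_le i ε (continuous_sobolevDensity hF).measurable

/- The bound does not depend on the radius: integrating `∂ₛ|F|²` along the rays that leave the ball
controls the trace on its boundary. -/
lemma exists_forall_lintegral_sphere_enorm_sq_le (m : ℕ) (V : Type*) [NormedAddCommGroup V]
    [InnerProductSpace ℝ V] :
    ∃ C : ℝ≥0, ∀ F : Euc (m + 1) → V, ContDiff ℝ 1 F →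
      Tendsto F (Bornology.cobounded (Euc (m + 1))) (𝓝 0) → ∀ (c : Euc (m + 1)) (ρ : ℝ), 0 ≤ ρ →
      ENNReal.ofReal ρ ^ m * ∫⁻ θ, ‖F (c + ρ • θ)‖ₑ ^ 2 ∂unitSphereMeasure m ≤
        C * ∫⁻ x, sobolevDensity F x := by
  refine ⟨(2 * (m + 1)) ^ m * ∑ _ : Fin (m + 1) × ℤˣ, (m + 1) ^ (m + 1),
    fun F hF hF₀ c ρ hρ => ?_⟩
  have hFc : ContDiff ℝ 1 fun z => F (c + z) := by fun_prop
  have hFc₀ : Tendsto (fun z => F (c + z)) (Bornology.cobounded (Euc (m + 1))) (𝓝 0) :=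
    hF₀.comp (tendsto_const_add_cobounded c)
  have hmeas : Measurable fun θ => ‖F (c + ρ • θ)‖ₑ ^ 2 :=
    (hF.continuous.comp (by fun_prop)).enorm.measurable.pow_const 2
  calc ENNReal.ofReal ρ ^ m * ∫⁻ θ, ‖F (c + ρ • θ)‖ₑ ^ 2 ∂unitSphereMeasure m
      ≤ ENNReal.ofReal ρ ^ m * ((2 * (m + 1)) ^ m * ∑ p : Fin (m + 1) × ℤˣ,
          ∫⁻ y in Metric.closedBall 0 1, ‖F (c + ρ • sphereChart p.1 p.2 y)‖ₑ ^ 2) := by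
        gcongr
        exact lintegral_unitSphereMeasure_le_sum hmeas
    _ = (2 * (m + 1)) ^ m * ∑ p : Fin (m + 1) × ℤˣ, ENNReal.ofReal ρ ^ m *
          ∫⁻ y in Metric.closedBall 0 1, ‖F (c + ρ • sphereChart p.1 p.2 y)‖ₑ ^ 2 := by
        rw [mul_left_comm, Finset.mul_sum]
    _ ≤ (2 * (m + 1)) ^ m * ∑ _ : Fin (m + 1) × ℤˣ,
          (m + 1) ^ (m + 1) * ∫⁻ x, sobolevDensity (fun z => F (c + z)) x := by
        exact mul_right_mono (Finset.sum_le_sum fun p _ =>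
          setLIntegral_sphereChart_enorm_sq_le p.1 p.2 hFc hFc₀ hρ)
    _ = _ := by
        simp only [sobolevDensity_comp_add_left, lintegral_add_left_eq_self (sobolevDensity F),
          ← Finset.sum_mul]
        push_cast
        rw [mul_assoc]

end Trace

/-! ### Ewald spheres -/

section EwaldPoint

variable {E : Type*} [NormedAddCommGroup E] [InnerProductSpace ℝ E] {r : ℝ} {θ η x y : E}

/-- The point of the Ewald sphere `Γ_r(η)` in the direction `θ` from its centre. -/
def ewaldPoint (r : ℝ) (θ η : E) : E := (2 : ℝ)⁻¹ • η + (r * ‖η‖ / 2) • θ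

lemma continuous_ewaldPoint (r : ℝ) : Continuous fun p : E × E => ewaldPoint r p.1 p.2 := by
  unfold ewaldPoint
  fun_prop

lemma sub_ewaldPoint (r : ℝ) (θ η : E) : η - ewaldPoint r θ η = ewaldPoint r (-θ) η := by
  unfold ewaldPoint
  module

lemma ewaldPoint_sub_ewaldPoint_neg (r : ℝ) (θ η : E) :
    ewaldPoint r θ η - ewaldPoint r (-θ) η = (r * ‖η‖) • θ := by
  unfold ewaldPoint
  module

lemma norm_mul_one_add_le_norm_ewaldPoint (hr : 0 ≤ r) (hθ : ‖θ‖ = 1) (hη : 0 ≤ ⟪θ, η⟫) :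
    ‖η‖ * (1 + r) / 4 ≤ ‖ewaldPoint r θ η‖ := by
  have hsq : ‖ewaldPoint r θ η‖ ^ 2 =
      ‖η‖ ^ 2 / 4 + r * ‖η‖ / 2 * ⟪θ, η⟫ + (r * ‖η‖ / 2) ^ 2 := by
    rw [ewaldPoint, norm_add_sq_real, norm_smul, norm_smul, inner_smul_left, inner_smul_right,
      real_inner_comm, hθ, mul_one, Real.norm_eq_abs (_ / _), sq_abs]
    norm_num
    ring
  refine (sq_le_sq₀ (by positivity) (norm_nonneg _)).1 ?_
  have : 0 ≤ r * ‖η‖ / 2 * ⟪θ, η⟫ := by positivity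
  nlinarith [sq_nonneg (‖η‖ * (1 - r))]

lemma norm_le_norm_of_ewaldPoint_eq (hr : 0 ≤ r) (hθ : ‖θ‖ = 1) (hy : 0 ≤ ⟪θ, y⟫)
    (h : ewaldPoint r θ x = ewaldPoint r θ y) : ‖y‖ ≤ ‖x‖ := by
  by_contra! hlt
  have hk : 0 ≤ r * (‖y‖ - ‖x‖) := mul_nonneg hr (sub_nonneg.2 hlt.le)
  have hxy : x = y + (r * (‖y‖ - ‖x‖)) • θ := by
    unfold ewaldPoint at h
    linear_combination (norm := module) (2 : ℝ) • h
  have hsq : ‖x‖ ^ 2 = ‖y‖ ^ 2 + 2 * (r * (‖y‖ - ‖x‖) * ⟪θ, y⟫) + (r * (‖y‖ - ‖x‖)) ^ 2 := by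
    conv_lhs => rw [hxy, norm_add_sq_real, inner_smul_right, norm_smul, real_inner_comm, hθ,
      mul_one, Real.norm_eq_abs, sq_abs]
  have : ‖y‖ ^ 2 ≤ ‖x‖ ^ 2 := by
    rw [hsq]
    linarith [mul_nonneg hk hy, sq_nonneg (r * (‖y‖ - ‖x‖))]
  exact hlt.not_ge ((sq_le_sq₀ (norm_nonneg _) (norm_nonneg _)).1 this)

lemma injOn_ewaldPoint (hr : 0 ≤ r) (hθ : ‖θ‖ = 1) : InjOn (ewaldPoint r θ) {η | 0 ≤ ⟪θ, η⟫} := by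
  intro x hx y hy h
  have hnorm : ‖x‖ = ‖y‖ := le_antisymm (norm_le_norm_of_ewaldPoint_eq hr hθ hx h.symm)
    (norm_le_norm_of_ewaldPoint_eq hr hθ hy h)
  simpa [ewaldPoint, hnorm] using h

/-- The derivative of `η ↦ ewaldPoint r θ η`, as half a transvection in the direction `θ`. -/
def ewaldDeriv (r : ℝ) (θ η : E) : E →L[ℝ] E :=
  (2 : ℝ)⁻¹ • (ContinuousLinearMap.id ℝ E + ((r * ‖η‖⁻¹) • innerSL ℝ η).smulRight θ)

lemma hasFDerivAt_ewaldPoint (hη : η ≠ 0) :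
    HasFDerivAt (ewaldPoint r θ) (ewaldDeriv r θ η) η := by
  have hnorm : HasFDerivAt (fun y : E => ‖y‖) (‖η‖⁻¹ • innerSL ℝ η) η := by
    have h := (hasStrictFDerivAt_norm_sq η).hasFDerivAt.sqrt
      (pow_ne_zero 2 (norm_ne_zero_iff.2 hη))
    simp only [Real.sqrt_sq (norm_nonneg _)] at h
    convert h using 1
    module
  have h := ((hasFDerivAt_id (𝕜 := ℝ) η).const_smul (2 : ℝ)⁻¹).add
    ((hnorm.const_mul (r / 2)).smul_const θ)
  convert h using 1
  · ext y
    simp only [ewaldPoint, id, div_mul_eq_mul_div, Pi.add_apply, Pi.smul_apply]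
  · ext z
    simp only [ewaldDeriv, smul_add, add_apply, smul_apply, ContinuousLinearMap.id_apply,
      ContinuousLinearMap.smulRight_apply, coe_innerSL_apply, smul_eq_mul, add_right_inj]
    module

lemma inv_pow_finrank_le_abs_det_ewaldDeriv (hr : 0 ≤ r) (hη : 0 ≤ ⟪θ, η⟫) [FiniteDimensional ℝ E] :
    2⁻¹ ^ Module.finrank ℝ E ≤ |(ewaldDeriv r θ η).det| := by
  have htrans : (ewaldDeriv r θ η : E →ₗ[ℝ] E) = (2 : ℝ)⁻¹ • LinearMap.transvection
      ((r * ‖η‖⁻¹) • (innerSL ℝ η : E →L[ℝ] ℝ).toLinearMap) θ := by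
    ext z
    simp [ewaldDeriv, LinearMap.transvection.apply]
  have hdet : (ewaldDeriv r θ η).det =
      2⁻¹ ^ Module.finrank ℝ E * (1 + r * ‖η‖⁻¹ * ⟪θ, η⟫) := by
    rw [ContinuousLinearMap.det, htrans, LinearMap.det_smul, LinearMap.transvection.det,
      real_inner_comm]
    simp
  have hge : 0 ≤ r * ‖η‖⁻¹ * ⟪θ, η⟫ := by positivity
  rw [hdet, abs_of_nonneg (by positivity)]
  exact le_mul_of_one_le_right (by positivity) (by linarith)

lemma setLIntegral_comp_ewaldPoint_le [FiniteDimensional ℝ E] [MeasurableSpace E] [BorelSpace E]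
    (μ : Measure E) [μ.IsAddHaarMeasure] (hr : 0 ≤ r) (hθ : ‖θ‖ = 1) (g : E → ℝ≥0∞) :
    ∫⁻ η in {η | 0 ≤ ⟪θ, η⟫}, g (ewaldPoint r θ η) ∂μ ≤
      2 ^ Module.finrank ℝ E * ∫⁻ u, g u ∂μ := by
  set S := {η : E | 0 ≤ ⟪θ, η⟫} \ {0}
  have hS : MeasurableSet S := (isClosed_le continuous_const
    (by fun_prop : Continuous fun η : E => ⟪θ, η⟫)).measurableSet.diff (measurableSet_singleton 0)
  have : Nontrivial E := ⟨θ, 0, norm_ne_zero_iff.1 (by simp [hθ])⟩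
  have hS' : S =ᵐ[μ] {η | 0 ≤ ⟪θ, η⟫} := sdiff_null_ae_eq_self (measure_singleton 0)
  have hdet : ∀ η ∈ S, 1 ≤ 2 ^ Module.finrank ℝ E *
      ENNReal.ofReal |(ewaldDeriv r θ η).det| := fun η hη => by
    have h := ENNReal.ofReal_le_ofReal (inv_pow_finrank_le_abs_det_ewaldDeriv hr hη.1)
    rw [inv_pow, ENNReal.ofReal_inv_of_pos (by positivity), ENNReal.ofReal_pow zero_le_two,
      ENNReal.ofReal_ofNat] at h
    exact (ENNReal.inv_le_iff_le_mul (by simp) (by simp)).1 h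
  rw [← setLIntegral_congr hS']
  calc ∫⁻ η in S, g (ewaldPoint r θ η) ∂μ
      ≤ ∫⁻ η in S, 2 ^ Module.finrank ℝ E *
          (ENNReal.ofReal |(ewaldDeriv r θ η).det| * g (ewaldPoint r θ η)) ∂μ :=
        setLIntegral_mono' hS fun η hη => by
          rw [← mul_assoc]
          exact le_mul_of_one_le_left zero_le (hdet η hη)
    _ = 2 ^ Module.finrank ℝ E * ∫⁻ u in ewaldPoint r θ '' S, g u ∂μ := by
        rw [lintegral_const_mul' _ _ (by finiteness),
          lintegral_image_eq_lintegral_abs_det_fderiv_mul μ hS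
          (fun η hη => (hasFDerivAt_ewaldPoint hη.2).hasFDerivWithinAt)
          ((injOn_ewaldPoint hr hθ).mono sdiff_subset)]
    _ ≤ 2 ^ Module.finrank ℝ E * ∫⁻ u, g u ∂μ := by
        gcongr
        exact Measure.restrict_le_self

end EwaldPoint

/-! ### The weighted Sobolev norm on the Fourier side -/

lemma eLpNorm_two_sq {X ε : Type*} [MeasurableSpace X] [TopologicalSpace ε] [ContinuousENorm ε]
    (f : X → ε) (μ : Measure X) : eLpNorm f 2 μ ^ 2 = ∫⁻ x, ‖f x‖ₑ ^ 2 ∂μ := by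
  simpa using eLpNorm_nnreal_pow_eq_lintegral (f := f) (μ := μ) (p := 2) two_ne_zero

section FourierPlancherel

variable {ι E V H : Type*} [NormedAddCommGroup E] [InnerProductSpace ℝ E]
  [NormedAddCommGroup V] [NormedSpace ℝ V]
  [NormedAddCommGroup H] [InnerProductSpace ℂ H] [CompleteSpace H]

lemma enorm_sq_le_sum_enorm_sq [Fintype ι] (b : OrthonormalBasis ι ℝ E) (L : E →L[ℝ] V) :
    ‖L‖ₑ ^ 2 ≤ ∑ i, ‖L (b i)‖ₑ ^ 2 := by
  have hL : ‖L‖ ≤ √(∑ i, ‖L (b i)‖ ^ 2) := by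
    refine L.opNorm_le_bound (by positivity) fun v => ?_
    calc ‖L v‖ = ‖∑ i, b.repr v i • L (b i)‖ := by
          conv_lhs => rw [← b.sum_repr v, map_sum]
          simp only [map_smul]
      _ ≤ ∑ i, ‖b.repr v i‖ * ‖L (b i)‖ := by
          simpa only [norm_smul] using norm_sum_le Finset.univ fun i => b.repr v i • L (b i)
      _ ≤ √(∑ i, ‖b.repr v i‖ ^ 2) * √(∑ i, ‖L (b i)‖ ^ 2) :=
          Real.sum_mul_le_sqrt_mul_sqrt _ _ _
      _ = √(∑ i, ‖L (b i)‖ ^ 2) * ‖v‖ := by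
          rw [mul_comm, ← EuclideanSpace.norm_eq, LinearIsometryEquiv.norm_map]
  have hsq := ENNReal.ofReal_le_ofReal ((Real.le_sqrt (norm_nonneg _) (by positivity)).1 hL)
  rw [ENNReal.ofReal_sum_of_nonneg fun i _ => by positivity] at hsq
  simpa only [ENNReal.ofReal_pow (norm_nonneg _), ofReal_norm] using hsq

variable [FiniteDimensional ℝ E] [MeasurableSpace E] [BorelSpace E]

lemma lintegral_enorm_sq_fourier (f : SchwartzMap E H) :
    ∫⁻ ξ, ‖(𝓕 f : SchwartzMap E H) ξ‖ₑ ^ 2 = ∫⁻ x, ‖f x‖ₑ ^ 2 := by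
  have hint (g : SchwartzMap E H) : ∫⁻ x, ‖g x‖ₑ ^ 2 = ENNReal.ofReal (∫ x, ‖g x‖ ^ 2) := by
    rw [ofReal_integral_eq_lintegral_ofReal ((g.memLp 2 volume).integrable_norm_pow two_ne_zero)
      (.of_forall fun x => by positivity)]
    simp only [ENNReal.ofReal_pow (norm_nonneg _), ofReal_norm]
  rw [hint, hint, SchwartzMap.integral_norm_sq_fourier]

lemma lintegral_enorm_fderiv_fourier_apply_sq (f : SchwartzMap E H) (v : E) :
    ∫⁻ ξ, ‖fderiv ℝ ⇑(𝓕 f : SchwartzMap E H) ξ v‖ₑ ^ 2 =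
      ∫⁻ x, ENNReal.ofReal ((2 * Real.pi * ⟪x, v⟫) ^ 2) * ‖f x‖ₑ ^ 2 := by
  have h := lintegral_enorm_sq_fourier
    (-(2 * Real.pi * Complex.I) • SchwartzMap.smulLeftCLM H (inner ℝ · v) f)
  rw [← SchwartzMap.lineDerivOp_fourier_eq] at h
  simp only [SchwartzMap.lineDerivOp_apply_eq_fderiv] at h
  rw [h]
  refine lintegral_congr fun x => ?_
  rw [smul_apply, SchwartzMap.smulLeftCLM_apply_apply (by fun_prop), enorm_smul, enorm_smul,
    ← mul_assoc, mul_pow]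
  congr 1
  rw [← sq_abs, ENNReal.ofReal_pow (abs_nonneg _), ← ofReal_norm, ← ofReal_norm,
    ← ENNReal.ofReal_mul (norm_nonneg _)]
  simp [abs_mul]

lemma lintegral_sobolevDensity_fourier_le (f : SchwartzMap E H) :
    ∫⁻ ξ, sobolevDensity ⇑(𝓕 f : SchwartzMap E H) ξ ≤
      ∫⁻ x, ENNReal.ofReal (1 + ‖(2 * Real.pi) • x‖ ^ 2) * ‖f x‖ₑ ^ 2 := by
  have hfm : Measurable fun x => ‖f x‖ₑ ^ 2 := f.continuous.enorm.measurable.pow_const 2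
  have hf' : Continuous fun ξ => (𝓕 f : SchwartzMap E H) ξ := (𝓕 f).continuous
  have hderiv : Continuous (fderiv ℝ ⇑(𝓕 f : SchwartzMap E H)) :=
    ((𝓕 f).smooth 1).continuous_fderiv one_ne_zero
  have b := stdOrthonormalBasis ℝ E
  have hmul (i) : Measurable fun x =>
      ENNReal.ofReal ((2 * Real.pi * ⟪x, b i⟫) ^ 2) * ‖f x‖ₑ ^ 2 :=
    Measurable.mul (f := fun x => ENNReal.ofReal _) (by fun_prop) hfm
  calc ∫⁻ ξ, sobolevDensity ⇑(𝓕 f : SchwartzMap E H) ξ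
      ≤ ∫⁻ ξ, (‖(𝓕 f : SchwartzMap E H) ξ‖ₑ ^ 2 +
          ∑ i, ‖fderiv ℝ ⇑(𝓕 f : SchwartzMap E H) ξ (b i)‖ₑ ^ 2) := by
        gcongr
        exact add_le_add_right (enorm_sq_le_sum_enorm_sq b _) _
    _ = ∫⁻ x, (‖f x‖ₑ ^ 2 +
          ∑ i, ENNReal.ofReal ((2 * Real.pi * ⟪x, b i⟫) ^ 2) * ‖f x‖ₑ ^ 2) := by
        rw [lintegral_add_left (Continuous.measurable (by fun_prop)),
          lintegral_add_left hfm,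
          lintegral_finsetSum _ fun i _ => Continuous.measurable (by fun_prop),
          lintegral_finsetSum _ fun i _ => hmul i, lintegral_enorm_sq_fourier]
        simp only [lintegral_enorm_fderiv_fourier_apply_sq]
    _ = ∫⁻ x, ENNReal.ofReal (1 + ‖(2 * Real.pi) • x‖ ^ 2) * ‖f x‖ₑ ^ 2 := by
        refine lintegral_congr fun x => ?_
        rw [← Finset.sum_mul, ← ENNReal.ofReal_sum_of_nonneg fun i _ => by positivity,
          ENNReal.ofReal_add zero_le_one (by positivity), add_mul, ENNReal.ofReal_one, one_mul]
        simp only [mul_pow, ← Finset.mul_sum]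
        rw [b.sum_sq_inner_left, norm_smul, mul_pow, Real.norm_eq_abs, sq_abs, mul_pow]

end FourierPlancherel

section WeightedFourier

variable {n : ℕ}

lemma jap_pos (x : Euc n) : 0 < jap x := Real.sqrt_pos.2 (by positivity)

lemma sq_jap (x : Euc n) : jap x ^ 2 = 1 + ‖x‖ ^ 2 := Real.sq_sqrt (by positivity)

lemma ft_eq_fourier (f : SchwartzMap (Euc n) ℂ) (ξ : Euc n) :
    ft f ξ = 𝓕 f ((2 * Real.pi)⁻¹ • ξ) := by
  rw [SchwartzMap.fourier_coe, Real.fourier_eq', ft]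
  congr 1 with x
  rw [smul_eq_mul, inner_smul_right, real_inner_comm]
  congr 2
  push_cast
  field_simp

/-- The function `ξ ↦ ⟨ξ⟩^β f̂(ξ)` as a Schwartz function. -/
def weightedFt (β : ℝ) (f : SchwartzMap (Euc n) ℂ) : SchwartzMap (Euc n) ℂ :=
  SchwartzMap.smulLeftCLM ℂ (fun ξ : Euc n => (1 + ‖ξ‖ ^ 2) ^ (β / 2))
    (SchwartzMap.compCLMOfContinuousLinearEquiv ℝ (ContinuousLinearEquiv.smulLeft
      (Units.mk0 (2 * Real.pi)⁻¹ (inv_ne_zero Real.two_pi_pos.ne'))) (𝓕 f))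

lemma weightedFt_apply (β : ℝ) (f : SchwartzMap (Euc n) ℂ) (ξ : Euc n) :
    weightedFt β f ξ = ((jap ξ ^ β : ℝ) : ℂ) * ft f ξ := by
  have hjap : jap ξ ^ β = (1 + ‖ξ‖ ^ 2) ^ (β / 2) := by
    rw [← sq_jap, ← Real.rpow_natCast_mul (jap_pos ξ).le]
    congr 1
    push_cast
    ring
  rw [weightedFt, SchwartzMap.smulLeftCLM_apply_apply (by fun_prop), ft_eq_fourier, hjap,
    Complex.real_smul]
  rfl

lemma besselD_eq_fourierInv (β : ℝ) (f : SchwartzMap (Euc n) ℂ) (x : Euc n) :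
    besselD β f x =
      (((2 * Real.pi) ^ n : ℝ)⁻¹ : ℝ) • 𝓕⁻ (weightedFt β f) ((2 * Real.pi)⁻¹ • x) := by
  rw [besselD, SchwartzMap.fourierInv_coe, Real.fourierInv_eq']
  congr 2 with ξ
  rw [smul_eq_mul, inner_smul_right, weightedFt_apply]
  congr 2
  push_cast
  field_simp

lemma wSobNorm_one_sq (β : ℝ) (f : SchwartzMap (Euc n) ℂ) :
    wSobNorm β 1 f ^ 2 = ENNReal.ofReal (((2 * Real.pi) ^ n)⁻¹) *
      ∫⁻ y, ENNReal.ofReal (1 + ‖(2 * Real.pi) • y‖ ^ 2) * ‖𝓕⁻ (weightedFt β f) y‖ₑ ^ 2 := by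
  set G : Euc n → ℝ≥0∞ := fun y =>
    ENNReal.ofReal (1 + ‖(2 * Real.pi) • y‖ ^ 2) * ‖𝓕⁻ (weightedFt β f) y‖ₑ ^ 2
  set c := ENNReal.ofReal (((2 * Real.pi) ^ n)⁻¹)
  have hpt (x : Euc n) : ‖jap x ^ (1 : ℝ) • besselD β f x‖ₑ ^ 2 =
      c ^ 2 * G ((2 * Real.pi)⁻¹ • x) := by
    simp only [G, c]
    rw [smul_inv_smul₀ Real.two_pi_pos.ne', Real.rpow_one, besselD_eq_fourierInv, enorm_smul,
      enorm_smul, mul_left_comm, mul_pow, mul_pow, ← sq_jap, ENNReal.ofReal_pow (jap_pos x).le,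
      Real.enorm_of_nonneg (jap_pos x).le, Real.enorm_of_nonneg (by positivity), mul_pow]
  have hscale : c * ∫⁻ x, G ((2 * Real.pi)⁻¹ • x) = ∫⁻ y, G y := by
    have h := lintegral_comp_smul volume G (inv_ne_zero Real.two_pi_pos.ne')
    rwa [abs_of_pos (by positivity), finrank_euclideanSpace_fin, inv_pow] at h
  rw [wSobNorm, eLpNorm_two_sq]
  simp only [hpt]
  rw [lintegral_const_mul' _ _ (by finiteness), sq, mul_assoc, hscale]

lemma lintegral_sobolevDensity_weightedFt_le (β : ℝ) (f : SchwartzMap (Euc n) ℂ) :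
    ∫⁻ ξ, sobolevDensity (weightedFt β f) ξ ≤
      ENNReal.ofReal ((2 * Real.pi) ^ n) * wSobNorm β 1 f ^ 2 := by
  rw [wSobNorm_one_sq, ← mul_assoc, ← ENNReal.ofReal_mul (by positivity),
    mul_inv_cancel₀ (by positivity), ENNReal.ofReal_one, one_mul]
  simpa only [FourierTransform.fourier_fourierInv_eq] using
    lintegral_sobolevDensity_fourier_le (𝓕⁻ (weightedFt β f))

end WeightedFourier

/-! ### The weights on the Ewald spheres -/

section EwaldWeight

variable {n : ℕ} {r α β β' lam c : ℝ} {θ η : Euc n}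

lemma one_le_jap (x : Euc n) : 1 ≤ jap x := Real.one_le_sqrt.2 (by linarith [sq_nonneg ‖x‖])

lemma norm_le_jap (x : Euc n) : ‖x‖ ≤ jap x := Real.le_sqrt_of_sq_le (by linarith)

lemma jap_rpow_le_mul_norm_rpow {x : Euc n} (hc : 0 < c) (hx : c ≤ ‖x‖) (e : ℝ) :
    jap x ^ e ≤ (√(1 + c⁻¹ ^ 2)) ^ |e| * ‖x‖ ^ e := by
  have hx₀ : 0 < ‖x‖ := hc.trans_le hx
  have hratio : jap x / ‖x‖ ≤ √(1 + c⁻¹ ^ 2) := by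
    rw [div_le_iff₀ hx₀, jap, ← Real.sqrt_sq hx₀.le, ← Real.sqrt_mul (by positivity),
      Real.sqrt_sq hx₀.le]
    have : 1 ≤ (c⁻¹ * ‖x‖) ^ 2 := one_le_pow₀ ((one_le_inv_mul₀ hc).2 hx)
    exact Real.sqrt_le_sqrt (by linarith)
  have hratio' : 1 ≤ jap x / ‖x‖ := (one_le_div hx₀).2 (norm_le_jap x)
  calc jap x ^ e = (jap x / ‖x‖) ^ e * ‖x‖ ^ e := by
        rw [← Real.mul_rpow (by positivity) hx₀.le, div_mul_cancel₀ _ hx₀.ne']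
    _ ≤ (jap x / ‖x‖) ^ |e| * ‖x‖ ^ e := by
        gcongr
        exact le_abs_self e
    _ ≤ (√(1 + c⁻¹ ^ 2)) ^ |e| * ‖x‖ ^ e := by gcongr

/- The two points differ by `r|η|θ`, so a small `ewaldPoint r (-θ) η` forces the direction of
`ewaldPoint r θ η` to be close to `θ`. -/
lemma norm_sub_normalize_ewaldPoint_mul_le (hr : 0 ≤ r) (hθ : ‖θ‖ = 1) (η : Euc n) :
    ‖θ - ‖ewaldPoint r θ η‖⁻¹ • ewaldPoint r θ η‖ * ‖ewaldPoint r θ η‖ ≤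
      2 * ‖ewaldPoint r (-θ) η‖ := by
  have hdiff := ewaldPoint_sub_ewaldPoint_neg r θ η
  set u := ewaldPoint r θ η
  set ξ := ewaldPoint r (-θ) η
  have hnorm : ‖u - ξ‖ = r * ‖η‖ := by
    rw [hdiff, norm_smul, hθ, mul_one, Real.norm_of_nonneg (by positivity)]
  calc ‖θ - ‖u‖⁻¹ • u‖ * ‖u‖ = ‖(‖u‖ - ‖u - ξ‖) • θ - ξ‖ := by
        rw [mul_comm, ← norm_smul_of_nonneg (norm_nonneg u), smul_sub, sub_smul, hnorm, ← hdiff]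
        rcases eq_or_ne u 0 with hu | hu
        · simp [hu]
        · rw [smul_inv_smul₀ (norm_ne_zero_iff.2 hu)]
          congr 1
          abel
    _ ≤ |‖u‖ - ‖u - ξ‖| + ‖ξ‖ := by
        simpa only [norm_smul, hθ, mul_one, Real.norm_eq_abs] using
          norm_sub_le ((‖u‖ - ‖u - ξ‖) • θ) ξ
    _ ≤ ‖ξ‖ + ‖ξ‖ := by
        gcongr
        simpa only [sub_sub_cancel] using abs_norm_sub_norm_le u (u - ξ)
    _ = 2 * ‖ξ‖ := (two_mul _).symm

lemma sq_jap_rpow_mul_norm_rpow_le (hr : 0 ≤ r) (hθ : ‖θ‖ = 1) (hη₀ : η ≠ 0)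
    (hη : 0 ≤ ⟪θ, η⟫) (hβ' : 0 ≤ β') (hββ' : β' ≤ β) :
    (jap (ewaldPoint r (-θ) η) ^ (-β) * jap (ewaldPoint r θ η) ^ (-β)) ^ 2 *
        ‖θ - ‖ewaldPoint r θ η‖⁻¹ • ewaldPoint r θ η‖ ^ (2 * β') ≤
      2 ^ (2 * β') * (‖η‖ * (1 + r) / 4) ^ (-(2 * β + 2 * β')) := by
  have : 0 < ‖η‖ := norm_pos_iff.2 hη₀
  have hlower := norm_mul_one_add_le_norm_ewaldPoint hr hθ hη
  have htrans := norm_sub_normalize_ewaldPoint_mul_le hr hθ η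
  set u := ewaldPoint r θ η
  set ξ := ewaldPoint r (-θ) η
  set t := ‖θ - ‖u‖⁻¹ • u‖
  have hu : 0 < ‖u‖ := lt_of_lt_of_le (by positivity) hlower
  have ht : t ^ (2 * β') ≤ 2 ^ (2 * β') * (jap ξ ^ (2 * β') * ‖u‖ ^ (-(2 * β'))) := by
    have h : t ≤ 2 * (jap ξ * ‖u‖⁻¹) := by
      rw [← mul_assoc, ← div_eq_mul_inv, le_div_iff₀ hu]
      exact htrans.trans (by gcongr; exact norm_le_jap ξ)
    refine (Real.rpow_le_rpow (norm_nonneg _) h (by positivity)).trans_eq ?_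
    have := jap_pos ξ
    rw [Real.mul_rpow zero_le_two (by positivity), Real.mul_rpow (by positivity) (by positivity),
      Real.inv_rpow hu.le, ← Real.rpow_neg hu.le]
  have hξ : jap ξ ^ (-(2 * β)) * jap ξ ^ (2 * β') ≤ 1 := by
    rw [← Real.rpow_add (jap_pos ξ)]
    exact Real.rpow_le_one_of_one_le_of_nonpos (one_le_jap ξ) (by linarith)
  have := (jap_pos ξ).le
  have hsq (x : Euc n) : (jap x ^ (-β)) ^ 2 = jap x ^ (-(2 * β)) := by
    rw [← Real.rpow_mul_natCast (jap_pos x).le, Nat.cast_ofNat, mul_comm, mul_neg]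
  calc (jap ξ ^ (-β) * jap u ^ (-β)) ^ 2 * t ^ (2 * β')
      = jap ξ ^ (-(2 * β)) * jap u ^ (-(2 * β)) * t ^ (2 * β') := by rw [mul_pow, hsq, hsq]
    _ ≤ jap ξ ^ (-(2 * β)) * ‖u‖ ^ (-(2 * β)) *
          (2 ^ (2 * β') * (jap ξ ^ (2 * β') * ‖u‖ ^ (-(2 * β')))) := by
        gcongr ?_ * ?_ * ?_
        exact Real.rpow_le_rpow_of_nonpos hu (norm_le_jap u) (by linarith)
    _ = jap ξ ^ (-(2 * β)) * jap ξ ^ (2 * β') *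
          (2 ^ (2 * β') * ‖u‖ ^ (-(2 * β + 2 * β'))) := by
        rw [neg_add, Real.rpow_add hu]
        ring
    _ ≤ 1 * (2 ^ (2 * β') * (‖η‖ * (1 + r) / 4) ^ (-(2 * β + 2 * β'))) := by
        gcongr ?_ * (_ * ?_)
        exact Real.rpow_le_rpow_of_nonpos (by positivity) hlower (by linarith)
    _ = 2 ^ (2 * β') * (‖η‖ * (1 + r) / 4) ^ (-(2 * β + 2 * β')) := one_mul _

lemma pow_mul_one_add_rpow_neg_le {m : ℕ} {s e : ℝ} (hr : 0 < r) (hs : m - s ≤ e) (he : e ≤ m) :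
    r ^ m * (1 + r) ^ (-s) ≤ r ^ e := by
  calc r ^ m * (1 + r) ^ (-s) = r ^ e * (r ^ (m - e) * (1 + r) ^ (-s)) := by
        rw [← mul_assoc, ← Real.rpow_add hr, add_sub_cancel, Real.rpow_natCast]
    _ ≤ r ^ e * ((1 + r) ^ (m - e) * (1 + r) ^ (-s)) := by
        gcongr
        linarith
    _ = r ^ e * (1 + r) ^ (m - e - s) := by rw [← Real.rpow_add (by positivity), sub_eq_add_neg _ s]
    _ ≤ r ^ e * 1 := by
        gcongr
        exact Real.rpow_le_one_of_one_le_of_nonpos (by linarith) (by linarith)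
    _ = r ^ e := mul_one _

lemma sq_jap_rpow_mul_pow_mul_rpow_le {m : ℕ} {s : ℝ} (hc : 0 < c) (hη : c ≤ ‖η‖) (hr : 0 < r)
    (hα : 2 * α - 2 + m - s ≤ 0) (hs : m - s ≤ 2 * lam) (hlam : 2 * lam ≤ m) :
    (jap η ^ α * ‖η‖⁻¹) ^ 2 * (r * ‖η‖ / 2) ^ m * (‖η‖ * (1 + r) / 4) ^ (-s) ≤
      ((√(1 + c⁻¹ ^ 2)) ^ |α|) ^ 2 * (2 ^ m)⁻¹ * 4 ^ s * c ^ (2 * α - 2 + m - s) *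
        (r ^ lam) ^ 2 := by
  have hη₀ : 0 < ‖η‖ := hc.trans_le hη
  have hpow : (‖η‖ ^ α * ‖η‖⁻¹) ^ 2 * ‖η‖ ^ m * ‖η‖ ^ (-s) = ‖η‖ ^ (2 * α - 2 + m - s) := by
    rw [← Real.rpow_neg_one, ← Real.rpow_add hη₀, ← Real.rpow_mul_natCast hη₀.le,
      ← Real.rpow_natCast _ m, ← Real.rpow_add hη₀, ← Real.rpow_add hη₀]
    push_cast
    ring_nf
  have hfour : (4⁻¹ : ℝ) ^ (-s) = 4 ^ s := by
    rw [Real.inv_rpow zero_le_four, Real.rpow_neg zero_le_four, inv_inv]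
  set k := (√(1 + c⁻¹ ^ 2)) ^ |α|
  calc (jap η ^ α * ‖η‖⁻¹) ^ 2 * (r * ‖η‖ / 2) ^ m * (‖η‖ * (1 + r) / 4) ^ (-s)
      ≤ (k * ‖η‖ ^ α * ‖η‖⁻¹) ^ 2 * (r * ‖η‖ / 2) ^ m * (‖η‖ * (1 + r) / 4) ^ (-s) := by
        have := (jap_pos η).le
        gcongr
        exact jap_rpow_le_mul_norm_rpow hc hη α
    _ = k ^ 2 * (2 ^ m)⁻¹ * 4 ^ s * ((‖η‖ ^ α * ‖η‖⁻¹) ^ 2 * ‖η‖ ^ m * ‖η‖ ^ (-s)) *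
          (r ^ m * (1 + r) ^ (-s)) := by
        rw [div_eq_mul_inv _ (4 : ℝ), Real.mul_rpow (by positivity) (by positivity),
          Real.mul_rpow hη₀.le (by positivity), hfour, div_pow, mul_pow]
        ring
    _ ≤ k ^ 2 * (2 ^ m)⁻¹ * 4 ^ s * c ^ (2 * α - 2 + m - s) * r ^ (2 * lam) := by
        rw [hpow]
        gcongr _ * ?_ * ?_
        · exact Real.rpow_le_rpow_of_nonpos hc hη hα
        · exact pow_mul_one_add_rpow_neg_le hr hs hlam
    _ = _ := by rw [← Real.rpow_mul_natCast hr.le, Nat.cast_ofNat, mul_comm lam]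

lemma exists_forall_ewaldWeight_le (n m : ℕ) (hc : 0 < c) (hβ' : 0 ≤ β') (hββ' : β' ≤ β)
    (hα : 2 * α - 2 + m - (2 * β + 2 * β') ≤ 0) (hlam : m - (2 * β + 2 * β') ≤ 2 * lam)
    (hlam' : 2 * lam ≤ m) :
    ∃ K : ℝ≥0, ∀ r, 0 < r → ∀ θ η : Euc n, ‖θ‖ = 1 → c ≤ ‖η‖ → 0 ≤ ⟪θ, η⟫ →
      ENNReal.ofReal ((jap η ^ α * ‖η‖⁻¹) ^ 2 * (r * ‖η‖ / 2) ^ m *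
          (jap (ewaldPoint r (-θ) η) ^ (-β) * jap (ewaldPoint r θ η) ^ (-β)) ^ 2) ≤
        K * ENNReal.ofReal (r ^ lam) ^ 2 *
          ‖θ - ‖ewaldPoint r θ η‖⁻¹ • ewaldPoint r θ η‖ₑ ^ (-(2 * β')) := by
  set k : ℝ := ((√(1 + c⁻¹ ^ 2)) ^ |α|) ^ 2 * (2 ^ m)⁻¹ * 4 ^ (2 * β + 2 * β') *
    c ^ (2 * α - 2 + m - (2 * β + 2 * β'))
  refine ⟨(2 ^ (2 * β') * k).toNNReal, fun r hr θ η hθ hη hθη => ?_⟩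
  have hη₀ : η ≠ 0 := norm_pos_iff.1 (hc.trans_le hη)
  have hweight := sq_jap_rpow_mul_norm_rpow_le hr.le hθ hη₀ hθη hβ' hββ'
  have hradial := sq_jap_rpow_mul_pow_mul_rpow_le (α := α) hc hη hr hα hlam hlam'
  set u := ewaldPoint r θ η
  set ξ := ewaldPoint r (-θ) η
  have hreal : (jap η ^ α * ‖η‖⁻¹) ^ 2 * (r * ‖η‖ / 2) ^ m *
      (jap ξ ^ (-β) * jap u ^ (-β)) ^ 2 * ‖θ - ‖u‖⁻¹ • u‖ ^ (2 * β') ≤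
        2 ^ (2 * β') * k * (r ^ lam) ^ 2 := by
    calc (jap η ^ α * ‖η‖⁻¹) ^ 2 * (r * ‖η‖ / 2) ^ m *
        (jap ξ ^ (-β) * jap u ^ (-β)) ^ 2 * ‖θ - ‖u‖⁻¹ • u‖ ^ (2 * β')
        ≤ (jap η ^ α * ‖η‖⁻¹) ^ 2 * (r * ‖η‖ / 2) ^ m *
          (2 ^ (2 * β') * (‖η‖ * (1 + r) / 4) ^ (-(2 * β + 2 * β'))) := by
          rw [mul_assoc _ (_ ^ 2)]
          gcongr
      _ ≤ 2 ^ (2 * β') * k * (r ^ lam) ^ 2 := by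
          rw [mul_left_comm, mul_assoc (2 ^ (2 * β'))]
          gcongr
  have hconst : ENNReal.ofReal (2 ^ (2 * β') * k * (r ^ lam) ^ 2) =
      (2 ^ (2 * β') * k).toNNReal * ENNReal.ofReal (r ^ lam) ^ 2 := by
    rw [ENNReal.ofReal_mul (by positivity), ENNReal.ofReal_pow (by positivity), ENNReal.ofReal]
  have hconst_ne : ENNReal.ofReal (2 ^ (2 * β') * k * (r ^ lam) ^ 2) ≠ 0 :=
    (ENNReal.ofReal_pos.2 (by positivity)).ne'
  rw [← hconst, ENNReal.rpow_neg, ← div_eq_mul_inv (ENNReal.ofReal _),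
    ENNReal.le_div_iff_mul_le (.inr hconst_ne) (.inr ENNReal.ofReal_ne_top), ← ofReal_norm,
    ENNReal.ofReal_rpow_of_nonneg (norm_nonneg _) (by positivity),
    ← ENNReal.ofReal_mul (by positivity)]
  exact ENNReal.ofReal_le_ofReal hreal

lemma exists_exponents {m : ℝ} (hm : 1 ≤ m) (hβ : 0 ≤ β) (hβm : (m - 2) / 4 < β)
    (hα : α ≤ 2 * β - (m - 2) / 2) (hα' : α < β + 1) :
    ∃ β' lam : ℝ, 0 ≤ β' ∧ β' ≤ β ∧ 2 * β' < m ∧ 2 * α - 2 + m - (2 * β + 2 * β') ≤ 0 ∧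
      m - (2 * β + 2 * β') ≤ 2 * lam ∧ 2 * lam ≤ m ∧ 0 < lam ∧ lam < 1 := by
  obtain ⟨β', hβ'₀, hβ', hβ'm, hαβ', hmβ'⟩ : ∃ β', 0 ≤ β' ∧ β' ≤ β ∧ 2 * β' < m ∧
      2 * α - 2 + m - (2 * β + 2 * β') ≤ 0 ∧ m - (2 * β + 2 * β') < 2 := by
    rcases lt_or_ge β (m / 2) with hβ₂ | hβ₂
    · exact ⟨β, hβ, le_rfl, by linarith, by linarith, by linarith⟩
    · have hmax := le_max_left (m / 2 - (β + 1 - α)) 0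
      have hmax' : max (m / 2 - (β + 1 - α)) 0 < m / 2 := max_lt (by linarith) (by linarith)
      have hmax₀ := le_max_right (m / 2 - (β + 1 - α)) 0
      exact ⟨_, hmax₀, by linarith, by linarith, by linarith, by linarith⟩
  refine ⟨β', max (1 / 2) ((m - (2 * β + 2 * β')) / 2), hβ'₀, hβ', hβ'm, hαβ', ?_, ?_,
    lt_max_of_lt_left one_half_pos, max_lt one_half_lt_one (by linarith)⟩
  · linarith [le_max_right (1 / 2 : ℝ) ((m - (2 * β + 2 * β')) / 2)]
  · have : max (1 / 2) ((m - (2 * β + 2 * β')) / 2) ≤ m / 2 := max_le (by linarith) (by linarith)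
    linarith

end EwaldWeight

/-! ### The estimate -/

section MeasurableSections

variable {α β : Type*} [MeasurableSpace α] [MeasurableSpace β] {μ : Measure α} {ν : Measure β}

lemma setLIntegral_section_eq_lintegral_indicator {s : Set (α × β)} (hs : MeasurableSet s)
    (f : α → β → ℝ≥0∞) (x : α) :
    ∫⁻ y in {y | (x, y) ∈ s}, f x y ∂ν = ∫⁻ y, s.indicator (Function.uncurry f) (x, y) ∂ν :=
  (lintegral_indicator (measurable_prodMk_left hs) _).symm

lemma measurable_setLIntegral_section [SFinite ν] {s : Set (α × β)} (hs : MeasurableSet s)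
    {f : α → β → ℝ≥0∞} (hf : Measurable (Function.uncurry f)) :
    Measurable fun x => ∫⁻ y in {y | (x, y) ∈ s}, f x y ∂ν := by
  simp only [setLIntegral_section_eq_lintegral_indicator hs]
  exact (hf.indicator hs).lintegral_prod_right'

lemma lintegral_setLIntegral_section_swap [SFinite μ] [SFinite ν] {s : Set (α × β)}
    (hs : MeasurableSet s) {f : α → β → ℝ≥0∞} (hf : Measurable (Function.uncurry f)) :
    ∫⁻ x, ∫⁻ y in {y | (x, y) ∈ s}, f x y ∂ν ∂μ =
      ∫⁻ y, ∫⁻ x in {x | (x, y) ∈ s}, f x y ∂μ ∂ν := by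
  simp only [setLIntegral_section_eq_lintegral_indicator hs]
  rw [lintegral_lintegral_swap (f := fun x y => s.indicator (Function.uncurry f) (x, y))
    (hf.indicator hs).aemeasurable]
  exact lintegral_congr fun y => lintegral_indicator (measurable_prodMk_right hs) _

lemma sq_lintegral_mul_le {f g : α → ℝ≥0∞} (hf : AEMeasurable f μ) (hg : AEMeasurable g μ) :
    (∫⁻ x, f x * g x ∂μ) ^ 2 ≤ (∫⁻ x, f x ^ 2 ∂μ) * ∫⁻ x, g x ^ 2 ∂μ := by
  have h := ENNReal.lintegral_mul_le_Lp_mul_Lq μ Real.HolderConjugate.two_two hf hg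
  have hsqrt (a : ℝ≥0∞) : (a ^ (1 / 2 : ℝ)) ^ 2 = a := by
    rw [← ENNReal.rpow_mul_natCast, Nat.cast_ofNat, one_div_mul_cancel two_ne_zero,
      ENNReal.rpow_one]
  simpa only [mul_pow, hsqrt, ENNReal.rpow_ofNat, Pi.mul_apply] using pow_le_pow_left' h 2

end MeasurableSections

section Hemisphere

variable {m : ℕ}

lemma measurableSet_inner_nonneg :
    MeasurableSet {p : Euc (m + 1) × Euc (m + 1) | 0 ≤ ⟪p.2, p.1⟫} :=
  (isClosed_le continuous_const (by fun_prop)).measurableSet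

lemma measurable_ewaldPoint (r : ℝ) :
    Measurable fun p : Euc (m + 1) × Euc (m + 1) => ewaldPoint r p.2 p.1 :=
  ((continuous_ewaldPoint r).comp continuous_swap).measurable

lemma lintegral_setLIntegral_comp_ewaldPoint_le {r : ℝ} (hr : 0 ≤ r)
    {g : Euc (m + 1) → Euc (m + 1) → ℝ≥0∞} (hg : Measurable (Function.uncurry g)) :
    ∫⁻ η, ∫⁻ θ in {θ | 0 ≤ ⟪θ, η⟫}, g (ewaldPoint r θ η) θ ∂unitSphereMeasure m ≤
      2 ^ (m + 1) * ∫⁻ u, ∫⁻ θ, g u θ ∂unitSphereMeasure m := by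
  have hpoint := (measurable_ewaldPoint (m := m) r).prodMk measurable_snd
  have hgr : Measurable (Function.uncurry fun η θ => g (ewaldPoint r θ η) θ) := hg.comp hpoint
  calc ∫⁻ η, ∫⁻ θ in {θ | 0 ≤ ⟪θ, η⟫}, g (ewaldPoint r θ η) θ ∂unitSphereMeasure m
      = ∫⁻ θ, (∫⁻ η in {η | 0 ≤ ⟪θ, η⟫}, g (ewaldPoint r θ η) θ) ∂unitSphereMeasure m :=
        lintegral_setLIntegral_section_swap measurableSet_inner_nonneg hgr
    _ ≤ ∫⁻ θ, (2 ^ (m + 1) * ∫⁻ u, g u θ) ∂unitSphereMeasure m := by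
        refine lintegral_mono_ae ?_
        filter_upwards [ae_unitSphereMeasure_norm_eq_one] with θ hθ
        simpa only [finrank_euclideanSpace_fin] using
          setLIntegral_comp_ewaldPoint_le volume hr hθ fun u => g u θ
    _ = 2 ^ (m + 1) * ∫⁻ u, ∫⁻ θ, g u θ ∂unitSphereMeasure m := by
        rw [lintegral_lintegral_swap hg.aemeasurable, lintegral_const_mul]
        exact hg.lintegral_prod_left'

/-- The integral over the hemisphere around `η` of `‖F u‖² ‖θ - u/‖u‖‖^(-a)`, where
`u = ewaldPoint r θ η`: the mass of `F` on the Ewald sphere, weighted by the angle between `u` and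
the direction `θ` that parametrizes it. -/
def angularMass (r a : ℝ) (F : Euc (m + 1) → ℂ) (η : Euc (m + 1)) : ℝ≥0∞ :=
  ∫⁻ θ in {θ | 0 ≤ ⟪θ, η⟫}, ‖θ - ‖ewaldPoint r θ η‖⁻¹ • ewaldPoint r θ η‖ₑ ^ (-a) *
    ‖F (ewaldPoint r θ η)‖ₑ ^ 2 ∂unitSphereMeasure m

lemma exists_forall_lintegral_angularMass_le {a : ℝ} (ha₀ : 0 ≤ a) (ha : a < m) :
    ∃ C : ℝ≥0, ∀ r, 0 ≤ r → ∀ F : Euc (m + 1) → ℂ, Measurable F →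
      ∫⁻ η, angularMass r a F η ≤ C * ∫⁻ u, ‖F u‖ₑ ^ 2 := by
  obtain ⟨C, hC⟩ := exists_forall_lintegral_unitSphereMeasure_rpow_neg_le ha₀ ha
  refine ⟨2 ^ (m + 1) * C, fun r hr F hF => ?_⟩
  have hFm : Measurable fun p : Euc (m + 1) × Euc (m + 1) => ‖F p.1‖ₑ ^ 2 :=
    (hF.comp measurable_fst).enorm.pow_const 2
  calc ∫⁻ η, angularMass r a F η
      ≤ 2 ^ (m + 1) * ∫⁻ u, ∫⁻ θ, ‖θ - ‖u‖⁻¹ • u‖ₑ ^ (-a) * ‖F u‖ₑ ^ 2 ∂unitSphereMeasure m :=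
        lintegral_setLIntegral_comp_ewaldPoint_le hr (Measurable.mul (by fun_prop) hFm)
    _ ≤ 2 ^ (m + 1) * ∫⁻ u, C * ‖F u‖ₑ ^ 2 := by
        gcongr with u
        rw [lintegral_mul_const _ (by fun_prop)]
        gcongr
        exact hC _
    _ = (2 ^ (m + 1) * C : ℝ≥0) * ∫⁻ u, ‖F u‖ₑ ^ 2 := by
        rw [lintegral_const_mul _ (hF.enorm.pow_const 2), ← mul_assoc]
        push_cast
        rfl

/-- The contribution to `K_r(g₁,g₂)(η)` of the hemisphere around `η` for the argument of `g₂`,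
written over the unit sphere; `η - ewaldPoint r θ η = ewaldPoint r (-θ) η`. -/
def hemisphereKr (r : ℝ) (g₁ g₂ : Euc (m + 1) → ℂ) (η : Euc (m + 1)) : ℝ≥0∞ :=
  ENNReal.ofReal ‖η‖⁻¹ * (ENNReal.ofReal (r * ‖η‖ / 2) ^ m * ∫⁻ θ in {θ | 0 ≤ ⟪θ, η⟫},
    ‖g₁ (ewaldPoint r (-θ) η)‖ₑ * ‖g₂ (ewaldPoint r θ η)‖ₑ ∂unitSphereMeasure m)

lemma measurable_comp_ewaldPoint (r : ℝ) {g₁ g₂ : Euc (m + 1) → ℂ} (hg₁ : Measurable g₁)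
    (hg₂ : Measurable g₂) :
    Measurable (Function.uncurry fun η θ : Euc (m + 1) =>
      ‖g₁ (ewaldPoint r (-θ) η)‖ₑ * ‖g₂ (ewaldPoint r θ η)‖ₑ) := by
  have hneg : Measurable fun p : Euc (m + 1) × Euc (m + 1) => ewaldPoint r (-p.2) p.1 :=
    (measurable_ewaldPoint r).comp (measurable_fst.prodMk measurable_snd.neg)
  exact (hg₁.comp hneg).enorm.mul (hg₂.comp (measurable_ewaldPoint r)).enorm

lemma measurable_hemisphereKr (r : ℝ) {g₁ g₂ : Euc (m + 1) → ℂ} (hg₁ : Measurable g₁)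
    (hg₂ : Measurable g₂) : Measurable (hemisphereKr r g₁ g₂) := by
  have := measurable_setLIntegral_section (ν := unitSphereMeasure m) measurableSet_inner_nonneg
    (measurable_comp_ewaldPoint r hg₁ hg₂)
  exact Measurable.mul (by fun_prop) (Measurable.mul (by fun_prop) this)

lemma lintegral_unitSphereMeasure_le_add_neg {k : Euc (m + 1) → ℝ≥0∞} (hk : Measurable k)
    (η : Euc (m + 1)) :
    ∫⁻ θ, k θ ∂unitSphereMeasure m ≤
      ∫⁻ θ in {θ | 0 ≤ ⟪θ, η⟫}, k θ ∂unitSphereMeasure m +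
        ∫⁻ θ in {θ | 0 ≤ ⟪θ, η⟫}, k (-θ) ∂unitSphereMeasure m := by
  have hS : MeasurableSet {θ | 0 ≤ ⟪θ, η⟫} := measurable_prodMk_left measurableSet_inner_nonneg
  rw [← lintegral_add_compl k hS]
  refine add_le_add_right ?_ _
  rw [← lintegral_indicator hS.compl, ← lintegral_indicator hS,
    ← lintegral_neg_unitSphereMeasure (hk.indicator hS.compl)]
  refine lintegral_mono fun θ => ?_
  by_cases hθ : 0 ≤ ⟪θ, η⟫
  · rw [indicator_of_mem (show θ ∈ {θ | 0 ≤ ⟪θ, η⟫} from hθ)]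
    exact indicator_le_self _ _ _
  · have hneg : 0 ≤ ⟪-θ, η⟫ := by rw [inner_neg_left]; linarith
    rw [indicator_of_notMem (notMem_compl_iff.2 (show -θ ∈ {θ | 0 ≤ ⟪θ, η⟫} from hneg))]
    exact zero_le

lemma enorm_Kr_le {r : ℝ} (hr : 0 ≤ r) {g₁ g₂ : Euc (m + 1) → ℂ} (hg₁ : Measurable g₁)
    (hg₂ : Measurable g₂) (η : Euc (m + 1)) :
    ‖Kr r g₁ g₂ η‖ₑ ≤ hemisphereKr r g₁ g₂ η + hemisphereKr r g₂ g₁ η := by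
  have hk := (measurable_comp_ewaldPoint r hg₂ hg₁).comp (measurable_prodMk_left (x := η))
  have hsphere : ‖∫ ξ, ‖g₁ ξ‖ * ‖g₂ (η - ξ)‖ ∂ewaldM (m + 1) r η‖ₑ ≤
      ENNReal.ofReal (r * ‖η‖ / 2) ^ m * ∫⁻ θ,
        ‖g₂ (ewaldPoint r (-θ) η)‖ₑ * ‖g₁ (ewaldPoint r θ η)‖ₑ ∂unitSphereMeasure m := by
    refine (enorm_integral_le_lintegral_enorm _).trans ?_
    rw [ewaldM, Nat.cast_succ, add_sub_cancel_right]
    refine (setLIntegral_sphere_le _ (by positivity) (by fun_prop)).trans_eq ?_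
    simp only [enorm_mul, enorm_norm, ← sub_ewaldPoint, mul_comm ‖g₂ _‖ₑ]
    rfl
  rw [Kr, enorm_mul, Real.enorm_of_nonneg (by positivity)]
  refine (mul_le_mul_right (hsphere.trans (mul_le_mul_right
    (lintegral_unitSphereMeasure_le_add_neg hk η) _)) _).trans_eq ?_
  simp only [Function.comp_apply, Function.uncurry_apply_pair, neg_neg, mul_add, hemisphereKr,
    mul_comm ‖g₁ _‖ₑ]
  rw [add_comm]

end Hemisphere

section Estimate

variable {m : ℕ} {α β β' lam c : ℝ}

lemma continuous_ft (f : SchwartzMap (Euc m) ℂ) : Continuous (ft f) := by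
  rw [funext (ft_eq_fourier f)]
  fun_prop

lemma enorm_ft_eq (β : ℝ) (f : SchwartzMap (Euc m) ℂ) (ξ : Euc m) :
    ‖ft f ξ‖ₑ = ENNReal.ofReal (jap ξ ^ (-β)) * ‖weightedFt β f ξ‖ₑ := by
  have hpos : 0 < jap ξ ^ β := Real.rpow_pos_of_pos (jap_pos ξ) β
  rw [weightedFt_apply, enorm_mul, ← ofReal_norm ((jap ξ ^ β : ℝ) : ℂ), Complex.norm_real,
    Real.norm_of_nonneg hpos.le, ← mul_assoc, Real.rpow_neg (jap_pos ξ).le,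
    ← ENNReal.ofReal_mul (by positivity), inv_mul_cancel₀ hpos.ne', ENNReal.ofReal_one, one_mul]

lemma exists_forall_lintegral_ewaldPoint_neg_le (m : ℕ) :
    ∃ C : ℝ≥0, ∀ (F : SchwartzMap (Euc (m + 1)) ℂ) (r : ℝ), 0 ≤ r → ∀ η,
      ENNReal.ofReal (r * ‖η‖ / 2) ^ m *
          ∫⁻ θ, ‖F (ewaldPoint r (-θ) η)‖ₑ ^ 2 ∂unitSphereMeasure m ≤
        C * ∫⁻ ξ, sobolevDensity F ξ := by
  obtain ⟨C, hC⟩ := exists_forall_lintegral_sphere_enorm_sq_le m ℂ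
  refine ⟨C, fun F r hr η => ?_⟩
  have hF : Tendsto F (Bornology.cobounded _) (𝓝 0) := by
    rw [Metric.cobounded_eq_cocompact]
    exact F.toZeroAtInfty.zero_at_infty'
  have hmeas : Measurable fun θ => ‖F (ewaldPoint r θ η)‖ₑ ^ 2 :=
    (F.continuous.measurable.comp
      ((measurable_ewaldPoint r).comp measurable_prodMk_left)).enorm.pow_const 2
  rw [lintegral_neg_unitSphereMeasure hmeas]
  exact hC F (F.smooth 1) hF _ _ (by positivity)

lemma exists_forall_setLIntegral_ewaldWeight_le (m : ℕ) (hc : 0 < c) (hβ' : 0 ≤ β')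
    (hββ' : β' ≤ β) (hα : 2 * α - 2 + m - (2 * β + 2 * β') ≤ 0)
    (hlam : m - (2 * β + 2 * β') ≤ 2 * lam) (hlam' : 2 * lam ≤ m) :
    ∃ K : ℝ≥0, ∀ r, 0 < r → ∀ F : Euc (m + 1) → ℂ, Measurable F → ∀ η, c ≤ ‖η‖ →
      ∫⁻ θ in {θ | 0 ≤ ⟪θ, η⟫}, ENNReal.ofReal ((jap η ^ α * ‖η‖⁻¹) ^ 2 * (r * ‖η‖ / 2) ^ m *
          (jap (ewaldPoint r (-θ) η) ^ (-β) * jap (ewaldPoint r θ η) ^ (-β)) ^ 2) *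
            ‖F (ewaldPoint r θ η)‖ₑ ^ 2 ∂unitSphereMeasure m ≤
        K * ENNReal.ofReal (r ^ lam) ^ 2 * angularMass r (2 * β') F η := by
  obtain ⟨K, hK⟩ := exists_forall_ewaldWeight_le (m + 1) m hc hβ' hββ' hα hlam hlam'
  refine ⟨K, fun r hr F hF η hη => ?_⟩
  have hpoint : Measurable fun θ => ewaldPoint r θ η :=
    (measurable_ewaldPoint r).comp measurable_prodMk_left
  have hmeas : Measurable fun θ => ‖θ - ‖ewaldPoint r θ η‖⁻¹ • ewaldPoint r θ η‖ₑ ^ (-(2 * β')) *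
      ‖F (ewaldPoint r θ η)‖ₑ ^ 2 :=
    Measurable.mul (by fun_prop) ((hF.comp hpoint).enorm.pow_const 2)
  rw [angularMass, ← lintegral_const_mul _ hmeas]
  refine setLIntegral_mono_ae' (measurable_prodMk_left measurableSet_inner_nonneg) ?_
  filter_upwards [ae_unitSphereMeasure_norm_eq_one] with θ hθ hθη
  rw [← mul_assoc]
  gcongr
  exact hK r hr θ η hθ hη hθη

lemma measurable_jap_rpow (e : ℝ) : Measurable fun x : Euc m => jap x ^ e := by
  unfold jap
  fun_prop

lemma sq_hemisphereKr_ft_le (r : ℝ) (f₁ f₂ : SchwartzMap (Euc (m + 1)) ℂ) (η : Euc (m + 1)) :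
    hemisphereKr r (ft f₁) (ft f₂) η ^ 2 ≤
      ENNReal.ofReal ‖η‖⁻¹ ^ 2 * (ENNReal.ofReal (r * ‖η‖ / 2) ^ m) ^ 2 *
        ((∫⁻ θ, ‖weightedFt β f₁ (ewaldPoint r (-θ) η)‖ₑ ^ 2 ∂unitSphereMeasure m) *
          ∫⁻ θ in {θ | 0 ≤ ⟪θ, η⟫}, ENNReal.ofReal
            ((jap (ewaldPoint r (-θ) η) ^ (-β) * jap (ewaldPoint r θ η) ^ (-β)) ^ 2) *
              ‖weightedFt β f₂ (ewaldPoint r θ η)‖ₑ ^ 2 ∂unitSphereMeasure m) := by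
  set S : Set (Euc (m + 1)) := {θ | 0 ≤ ⟪θ, η⟫}
  set F₁ := fun θ => ‖weightedFt β f₁ (ewaldPoint r (-θ) η)‖ₑ
  set F₂ := fun θ => ‖weightedFt β f₂ (ewaldPoint r θ η)‖ₑ
  set w := fun θ => jap (ewaldPoint r (-θ) η) ^ (-β) * jap (ewaldPoint r θ η) ^ (-β)
  have hpoint : Measurable fun θ => ewaldPoint r θ η :=
    (measurable_ewaldPoint r).comp measurable_prodMk_left
  have hpoint' : Measurable fun θ => ewaldPoint r (-θ) η := hpoint.comp measurable_neg
  have hF₁ : Measurable F₁ := ((weightedFt β f₁).continuous.measurable.comp hpoint').enorm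
  have hF₂ : Measurable F₂ := ((weightedFt β f₂).continuous.measurable.comp hpoint).enorm
  have hw : Measurable w :=
    ((measurable_jap_rpow _).comp hpoint').mul ((measurable_jap_rpow _).comp hpoint)
  have hw₀ (θ) : 0 ≤ w θ := by
    have := jap_pos (ewaldPoint r θ η)
    have := jap_pos (ewaldPoint r (-θ) η)
    positivity
  have hfactor (θ) : ‖ft f₁ (ewaldPoint r (-θ) η)‖ₑ * ‖ft f₂ (ewaldPoint r θ η)‖ₑ =
      F₁ θ * (ENNReal.ofReal (w θ) * F₂ θ) := by
    have := (jap_pos (ewaldPoint r (-θ) η)).le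
    rw [enorm_ft_eq β f₁, enorm_ft_eq β f₂, ENNReal.ofReal_mul (by positivity)]
    ring
  rw [hemisphereKr, mul_pow, mul_pow, ← mul_assoc]
  refine mul_le_mul_right ?_ _
  calc (∫⁻ θ in S, ‖ft f₁ (ewaldPoint r (-θ) η)‖ₑ * ‖ft f₂ (ewaldPoint r θ η)‖ₑ
        ∂unitSphereMeasure m) ^ 2
      = (∫⁻ θ in S, F₁ θ * (ENNReal.ofReal (w θ) * F₂ θ) ∂unitSphereMeasure m) ^ 2 := by
        simp only [hfactor]
    _ ≤ (∫⁻ θ in S, F₁ θ ^ 2 ∂unitSphereMeasure m) *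
          ∫⁻ θ in S, (ENNReal.ofReal (w θ) * F₂ θ) ^ 2 ∂unitSphereMeasure m :=
        sq_lintegral_mul_le hF₁.aemeasurable (hw.ennreal_ofReal.mul hF₂).aemeasurable
    _ ≤ (∫⁻ θ, F₁ θ ^ 2 ∂unitSphereMeasure m) *
          ∫⁻ θ in S, ENNReal.ofReal (w θ ^ 2) * F₂ θ ^ 2 ∂unitSphereMeasure m := by
        simp only [mul_pow, ENNReal.ofReal_pow (hw₀ _)]
        gcongr
        exact Measure.restrict_le_self

lemma exists_forall_sq_jap_mul_hemisphereKr_le (m : ℕ) (hc : 0 < c) (hβ' : 0 ≤ β')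
    (hββ' : β' ≤ β) (hα : 2 * α - 2 + m - (2 * β + 2 * β') ≤ 0)
    (hlam : m - (2 * β + 2 * β') ≤ 2 * lam) (hlam' : 2 * lam ≤ m) :
    ∃ C : ℝ≥0, ∀ (f₁ f₂ : SchwartzMap (Euc (m + 1)) ℂ) (r : ℝ), 0 < r → ∀ η, c ≤ ‖η‖ →
      (ENNReal.ofReal (jap η ^ α) * hemisphereKr r (ft f₁) (ft f₂) η) ^ 2 ≤
        C * ENNReal.ofReal (r ^ lam) ^ 2 * (∫⁻ ξ, sobolevDensity (weightedFt β f₁) ξ) *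
          angularMass r (2 * β') (weightedFt β f₂) η := by
  obtain ⟨C, hC⟩ := exists_forall_lintegral_ewaldPoint_neg_le m
  obtain ⟨K, hK⟩ := exists_forall_setLIntegral_ewaldWeight_le m hc hβ' hββ' hα hlam hlam'
  refine ⟨C * K, fun f₁ f₂ r hr η hη => ?_⟩
  have htrace := hC (weightedFt β f₁) r hr.le η
  have hweight := hK r hr (weightedFt β f₂) (weightedFt β f₂).continuous.measurable η hη
  have hjap := (jap_pos η).le
  have hA : ENNReal.ofReal ((jap η ^ α * ‖η‖⁻¹) ^ 2 * (r * ‖η‖ / 2) ^ m) =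
      ENNReal.ofReal (jap η ^ α) ^ 2 * ENNReal.ofReal ‖η‖⁻¹ ^ 2 *
        ENNReal.ofReal (r * ‖η‖ / 2) ^ m := by
    rw [ENNReal.ofReal_mul (by positivity), ENNReal.ofReal_pow (by positivity),
      ENNReal.ofReal_pow (by positivity), ENNReal.ofReal_mul (by positivity), mul_pow]
  have hA₀ : 0 ≤ (jap η ^ α * ‖η‖⁻¹) ^ 2 * (r * ‖η‖ / 2) ^ m := by positivity
  simp only [ENNReal.ofReal_mul hA₀, mul_assoc _ _ (‖_‖ₑ ^ 2)] at hweight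
  rw [lintegral_const_mul' _ _ ENNReal.ofReal_ne_top, hA] at hweight
  rw [mul_pow]
  refine (mul_le_mul_right (sq_hemisphereKr_ft_le (β := β) r f₁ f₂ η) _).trans ?_
  convert mul_le_mul' htrace hweight using 1
  · ring
  · push_cast
    ring

lemma measurable_angularMass (r a : ℝ) {F : Euc (m + 1) → ℂ} (hF : Measurable F) :
    Measurable (angularMass r a F) := by
  have hpoint := measurable_ewaldPoint (m := m) r
  have hangle : Measurable fun p : Euc (m + 1) × Euc (m + 1) =>
      ‖p.2 - ‖ewaldPoint r p.2 p.1‖⁻¹ • ewaldPoint r p.2 p.1‖ₑ ^ (-a) := by fun_prop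
  exact measurable_setLIntegral_section (ν := unitSphereMeasure m) measurableSet_inner_nonneg
    (hangle.mul ((hF.comp hpoint).enorm.pow_const 2))

lemma exists_forall_eLpNorm_hemisphereKr_le (m : ℕ) (hc : 0 < c) (hβ' : 0 ≤ β')
    (hββ' : β' ≤ β) (hβ'm : 2 * β' < m) (hα : 2 * α - 2 + m - (2 * β + 2 * β') ≤ 0)
    (hlam : m - (2 * β + 2 * β') ≤ 2 * lam) (hlam' : 2 * lam ≤ m) :
    ∃ C : ℝ≥0, ∀ (f₁ f₂ : SchwartzMap (Euc (m + 1)) ℂ) (r : ℝ), 0 < r →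
      eLpNorm (fun η => ENNReal.ofReal (jap η ^ α) * hemisphereKr r (ft f₁) (ft f₂) η) 2
          (volume.restrict {η | c ≤ ‖η‖}) ≤
        C * ENNReal.ofReal (r ^ lam) * wSobNorm β 1 f₁ * wSobNorm β 1 f₂ := by
  obtain ⟨C, hC⟩ := exists_forall_sq_jap_mul_hemisphereKr_le m hc hβ' hββ' hα hlam hlam'
  obtain ⟨K, hK⟩ := exists_forall_lintegral_angularMass_le (mul_nonneg zero_le_two hβ') hβ'm
  set p : ℝ≥0 := ((2 * Real.pi) ^ (m + 1)).toNNReal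
  refine ⟨NNReal.sqrt (C * K) * p, fun f₁ f₂ r hr => ?_⟩
  rw [← ENNReal.pow_le_pow_left_iff two_ne_zero, eLpNorm_two_sq]
  simp only [enorm_eq_self]
  set F := weightedFt β f₂
  have hF : ∫⁻ u, ‖F u‖ₑ ^ 2 ≤ p * wSobNorm β 1 f₂ ^ 2 :=
    (lintegral_mono fun _ => le_self_add).trans (lintegral_sobolevDensity_weightedFt_le β f₂)
  set D := ∫⁻ ξ, sobolevDensity (weightedFt β f₁) ξ
  set A := C * ENNReal.ofReal (r ^ lam) ^ 2
  calc ∫⁻ η in {η | c ≤ ‖η‖},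
        (ENNReal.ofReal (jap η ^ α) * hemisphereKr r (ft f₁) (ft f₂) η) ^ 2
      ≤ ∫⁻ η in {η | c ≤ ‖η‖}, A * D * angularMass r (2 * β') F η :=
        setLIntegral_mono' (measurableSet_le measurable_const measurable_norm) fun η hη =>
          hC f₁ f₂ r hr η hη
    _ ≤ ∫⁻ η, A * D * angularMass r (2 * β') F η := setLIntegral_le_lintegral _ _
    _ = A * D * ∫⁻ η, angularMass r (2 * β') F η :=
        lintegral_const_mul _ (measurable_angularMass r _ F.continuous.measurable)
    _ ≤ A * (p * wSobNorm β 1 f₁ ^ 2) *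
          (K * (p * wSobNorm β 1 f₂ ^ 2)) := by
        gcongr
        · exact lintegral_sobolevDensity_weightedFt_le β f₁
        · exact (hK r hr.le F F.continuous.measurable).trans (by gcongr)
    _ = ((NNReal.sqrt (C * K) ^ 2 : ℝ≥0) * p ^ 2) * ENNReal.ofReal (r ^ lam) ^ 2 *
          wSobNorm β 1 f₁ ^ 2 * wSobNorm β 1 f₂ ^ 2 := by
        rw [NNReal.sq_sqrt]
        push_cast
        ring
    _ = _ := by
        push_cast
        ring

lemma enorm_jap_mul_Kr_le {χ : Euc (m + 1) → ℝ} (hχ : ∀ ξ, |χ ξ| ≤ 1)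
    (hχ₀ : ∀ ξ, ‖ξ‖ < c → χ ξ = 0) {r : ℝ} (hr : 0 ≤ r) {g₁ g₂ : Euc (m + 1) → ℂ}
    (hg₁ : Measurable g₁) (hg₂ : Measurable g₂) (η : Euc (m + 1)) :
    ‖jap η ^ α * (χ η * Kr r g₁ g₂ η)‖ₑ ≤ {η | c ≤ ‖η‖}.indicator
      (fun η => ENNReal.ofReal (jap η ^ α) * hemisphereKr r g₁ g₂ η +
        ENNReal.ofReal (jap η ^ α) * hemisphereKr r g₂ g₁ η) η := by
  rcases lt_or_ge ‖η‖ c with hη | hη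
  · simp [hχ₀ η hη]
  have hχη : ‖χ η‖ₑ ≤ 1 := by
    rw [← ofReal_norm, ← ENNReal.ofReal_one]
    exact ENNReal.ofReal_le_ofReal (hχ η)
  rw [indicator_of_mem (show η ∈ {η | c ≤ ‖η‖} from hη), ← mul_add, enorm_mul, enorm_mul,
    Real.enorm_of_nonneg (Real.rpow_nonneg (jap_pos η).le α)]
  gcongr
  simpa only [one_mul] using mul_le_mul' hχη (enorm_Kr_le hr hg₁ hg₂ η)

end Estimate

theorem stmt5_general (n : ℕ) (hn : 2 ≤ n) (β α : ℝ) (hβ : 0 ≤ β)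
    (hβn : ((n : ℝ) - 3) / 4 < β) (hα : α ≤ 2 * β - ((n : ℝ) - 3) / 2) (hα' : α < β + 1)
    (C₀ : ℝ) (hC₀ : 0 < C₀) :
    ∃ lam C : ℝ, 0 < lam ∧ lam < 1 ∧ 0 < C ∧
      ∀ χ : Euc n → ℝ, (∀ ξ, |χ ξ| ≤ 1) → (∀ ξ, ‖ξ‖ < C₀ → χ ξ = 0) →
        ∀ (f₁ f₂ : SchwartzMap (Euc n) ℂ) (r : ℝ), 0 < r →
          eLpNorm (fun η : Euc n => (jap η ^ α : ℝ) * (χ η * Kr r (ft ⇑f₁) (ft ⇑f₂) η))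
              2 volume
            ≤ ENNReal.ofReal (C * r ^ lam) * wSobNorm β 1 (⇑f₁) * wSobNorm β 1 (⇑f₂) := by
  obtain ⟨m, rfl⟩ : ∃ m, n = m + 1 := ⟨n - 1, by lia⟩
  push_cast at hβn hα
  obtain ⟨β', lam, hβ', hββ', hβ'm, hαβ', hlam, hlam', hlam₀, hlam₁⟩ :=
    exists_exponents (m := m) (by exact_mod_cast Nat.le_of_succ_le_succ hn) hβ (by linarith)
      (by linarith) hα'
  obtain ⟨C, hC⟩ :=
    exists_forall_eLpNorm_hemisphereKr_le m hC₀ hβ' hββ' hβ'm hαβ' hlam hlam'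
  refine ⟨lam, 2 * C + 1, hlam₀, hlam₁, by positivity, fun χ hχ hχ₀ f₁ f₂ r hr => ?_⟩
  have hft (f : SchwartzMap (Euc (m + 1)) ℂ) : Measurable (ft f) := (continuous_ft f).measurable
  set B := fun (f g : SchwartzMap (Euc (m + 1)) ℂ) η =>
    ENNReal.ofReal (jap η ^ α) * hemisphereKr r (ft f) (ft g) η
  have hB (f g) : AEStronglyMeasurable (B f g) (volume.restrict {η | C₀ ≤ ‖η‖}) :=
    ((measurable_jap_rpow α).ennreal_ofReal.mul
      (measurable_hemisphereKr r (hft f) (hft g))).aestronglyMeasurable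
  calc eLpNorm (fun η => jap η ^ α * (χ η * Kr r (ft f₁) (ft f₂) η)) 2 volume
      ≤ eLpNorm ({η | C₀ ≤ ‖η‖}.indicator (B f₁ f₂ + B f₂ f₁)) 2 volume :=
        eLpNorm_mono_enorm fun η =>
          enorm_jap_mul_Kr_le hχ hχ₀ hr.le (hft f₁) (hft f₂) η
    _ = eLpNorm (B f₁ f₂ + B f₂ f₁) 2 (volume.restrict {η | C₀ ≤ ‖η‖}) :=
        eLpNorm_indicator_eq_eLpNorm_restrict (measurableSet_le measurable_const measurable_norm)
    _ ≤ C * ENNReal.ofReal (r ^ lam) * wSobNorm β 1 f₁ * wSobNorm β 1 f₂ +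
          C * ENNReal.ofReal (r ^ lam) * wSobNorm β 1 f₂ * wSobNorm β 1 f₁ :=
        (eLpNorm_add_le (hB _ _) (hB _ _) one_le_two).trans
          (add_le_add (hC f₁ f₂ r hr) (hC f₂ f₁ r hr))
    _ = (2 * C : ℝ≥0) * ENNReal.ofReal (r ^ lam) * wSobNorm β 1 f₁ * wSobNorm β 1 f₂ := by
        push_cast
        ring
    _ ≤ ENNReal.ofReal ((2 * C + 1) * r ^ lam) * wSobNorm β 1 f₁ * wSobNorm β 1 f₂ := by
        rw [ENNReal.ofReal_mul (by positivity)]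
        gcongr
        rw [← ENNReal.ofReal_coe_nnreal]
        exact ENNReal.ofReal_le_ofReal (by push_cast; linarith)

/-- weighted `L²` estimate for `χ·K_r(f̂₁,f̂₂)`. -/
theorem stmt5 (n : ℕ) (hn : 2 ≤ n) (β α : ℝ) (hβ : 0 ≤ β)
    (hrange : (((n : ℝ) - 3) / 2 < β ∧ β < ((n : ℝ) - 1) / 2 ∧
        α ≤ 2 * β - ((n : ℝ) - 3) / 2) ∨
      (((n : ℝ) - 1) / 2 ≤ β ∧ α < β + 1))
    (C₀ : ℝ) (hC₀ : 1 ≤ C₀) (χ : Euc n → ℝ) (hχsm : ContDiff ℝ (⊤ : ℕ∞) χ)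
    (hχ01 : ∀ ξ, χ ξ ∈ Set.Icc (0 : ℝ) 1)
    (hχ1 : ∀ ξ : Euc n, 2 * C₀ < ‖ξ‖ → χ ξ = 1)
    (hχ0 : ∀ ξ : Euc n, ‖ξ‖ < C₀ → χ ξ = 0) :
    ∃ lam C : ℝ, 0 < lam ∧ lam < 1 ∧ 0 < C ∧
      ∀ (f₁ f₂ : SchwartzMap (Euc n) ℂ) (r : ℝ), 0 < r →
        eLpNorm (fun η : Euc n => (jap η ^ α : ℝ) * (χ η * Kr r (ft ⇑f₁) (ft ⇑f₂) η))
            2 volume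
          ≤ ENNReal.ofReal (C * r ^ lam) * wSobNorm β 1 (⇑f₁) * wSobNorm β 1 (⇑f₂) := by
  obtain ⟨hβn, hα, hα'⟩ :
      ((n : ℝ) - 3) / 4 < β ∧ α ≤ 2 * β - ((n : ℝ) - 3) / 2 ∧ α < β + 1 := by
    have : (2 : ℝ) ≤ n := by exact_mod_cast hn
    rcases hrange with ⟨hβn, hβn', hα⟩ | ⟨hβn, hα⟩ <;> refine ⟨?_, ?_, ?_⟩ <;> linarith
  obtain ⟨lam, C, hlam₀, hlam₁, hC, h⟩ :=
    stmt5_general n hn β α hβ hβn hα hα' C₀ (zero_lt_one.trans_le hC₀)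
  exact ⟨lam, C, hlam₀, hlam₁, hC,
    h χ (fun ξ => abs_le.2 ⟨by linarith [(hχ01 ξ).1], (hχ01 ξ).2⟩) hχ0⟩
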